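/- arXiv:1311.7049 — 2 statements merged into one kernel-verified Lean document; each statement's English description precedes it below -/
import Mathlib

section
/- Let X be a strictly stable random variable with parameters (ν, θ, τ). Then E[(log|X|)⁴] = τ⁴ + 6τ²·DV + 8τ·ζ(3)(ν^{3/2} − 1) + 3·DV² + π⁴((1 − θ⁴)/8 + (ν² − 1)/15). -/
open MeasureTheory ProbabilityTheory

/-- The real value of the Riemann zeta function at a real argument. -/
noncomputable def zetaR (s : ℝ) : ℝ := (riemannZeta (s : ℂ)).re

/-- A real random variable `X` is strictly stable with parameters `(ν, θ, τ)` if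
`ν ≥ 1/4`, `|θ| ≤ min 1 (2√ν − 1)`, `P(X = 0) = 0`, `log |X|` has finite absolute
moments of every order, and the characteristic function of `X` is
`E[exp(i k X)] = exp(−exp(ν^{−1/2}(log|k| + τ − i(π/2)θ sign k) + C(ν^{−1/2} − 1)))`
for all real `k ≠ 0`, where `C` is the Euler–Mascheroni constant. -/
def IsStrictlyStable {Ω : Type*} [MeasureSpace Ω] (X : Ω → ℝ) (ν θ τ : ℝ) : Prop :=
  Measurable X ∧ (1/4 : ℝ) ≤ ν ∧ |θ| ≤ min 1 (2 * Real.sqrt ν - 1) ∧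
  (ℙ : Measure Ω) {ω | X ω = 0} = 0 ∧
  (∀ p : ℕ, Integrable (fun ω => (abs (Real.log (abs (X ω)))) ^ p)) ∧
  ∀ k : ℝ, k ≠ 0 →
    (∫ ω, Complex.exp (Complex.I * (k : ℂ) * (X ω : ℂ))) =
      Complex.exp (-Complex.exp
        (((ν ^ (-(1/2) : ℝ) : ℝ) : ℂ) *
            (((Real.log |k| : ℝ) : ℂ) + (τ : ℂ) -
              Complex.I * ((Real.pi / 2 : ℝ) : ℂ) * (θ : ℂ) * ((Real.sign k : ℝ) : ℂ)) +
          ((Real.eulerMascheroniConstant : ℝ) : ℂ) * (((ν ^ (-(1/2) : ℝ) : ℝ) : ℂ) - 1)))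

open Filter Topology Set

lemma ss_bnd_integrable {p : ℝ} (h0 : 0 < p) (h1 : p < 1) :
    IntegrableOn (fun u : ℝ => min u 1 * u ^ (-1 - p)) (Ioi 0) := by
  rw [← Ioc_union_Ioi_eq_Ioi (zero_le_one (α := ℝ))]
  refine IntegrableOn.union ?_ ?_
  · have : IntegrableOn (fun u : ℝ => u ^ (-p)) (Ioc 0 1) := by
      have := intervalIntegral.intervalIntegrable_rpow' (a := 0) (b := 1) (r := -p) (by linarith)
      exact (intervalIntegrable_iff_integrableOn_Ioc_of_le zero_le_one).1 this
    refine this.congr_fun (fun u hu => ?_) measurableSet_Ioc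
    dsimp only
    rw [min_eq_left hu.2, show -p = 1 + (-1 - p) by ring, Real.rpow_add hu.1, Real.rpow_one]
  · have : IntegrableOn (fun u : ℝ => u ^ (-1 - p)) (Ioi 1) :=
      integrableOn_Ioi_rpow_of_lt (by linarith) one_pos
    refine this.congr_fun (fun u hu => ?_) measurableSet_Ioi
    dsimp only
    rw [min_eq_right (le_of_lt hu), one_mul]

lemma ss_norm_le {z : ℂ} (hz : 0 ≤ z.re) : ‖1 - Complex.exp (-z)‖ ≤ 2 ∧
    ‖1 - Complex.exp (-z)‖ ≤ 2 * ‖z‖ := by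
  have h2 : ‖1 - Complex.exp (-z)‖ ≤ 2 := by
    refine (norm_sub_le _ _).trans ?_
    rw [Complex.norm_exp, norm_one]
    have : Real.exp (-z).re ≤ 1 := by
      rw [Real.exp_le_one_iff]; simpa using hz
    linarith
  refine ⟨h2, ?_⟩
  rcases le_total ‖z‖ 1 with h | h
  · have := Complex.norm_exp_sub_one_le (x := -z) (by simpa using h)
    rw [norm_sub_rev]; simpa using this
  · linarith

noncomputable def ssF (p : ℝ) (w : ℂ) (u : ℝ) : ℂ :=
  ((u ^ (-1 - p) : ℝ) : ℂ) * (1 - Complex.exp (-(w * u)))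

lemma ssF_meas (p : ℝ) (w : ℂ) : AEStronglyMeasurable (ssF p w) (volume.restrict (Ioi 0)) := by
  have : Measurable (ssF p w) := by unfold ssF; fun_prop
  exact this.aestronglyMeasurable

lemma ssF_bound (p : ℝ) {w : ℂ} (hw : 0 ≤ w.re) {u : ℝ} (hu : 0 < u) :
    ‖ssF p w u‖ ≤ 2 * (‖w‖ + 1) * (min u 1 * u ^ (-1 - p)) := by
  have hz : 0 ≤ (w * u).re := by simp; positivity
  obtain ⟨h1, h2⟩ := ss_norm_le hz
  unfold ssF
  rw [norm_mul, Complex.norm_real] at *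
  have hp : 0 < u ^ (-1 - p) := Real.rpow_pos_of_pos hu _
  rw [Real.norm_of_nonneg hp.le] at *
  rw [Real.norm_of_nonneg hu.le] at *
  have : ‖1 - Complex.exp (-(w * u))‖ ≤ 2 * (‖w‖ + 1) * min u 1 := by
    rcases le_total u 1 with h | h
    · rw [min_eq_left h]; nlinarith [norm_nonneg w]
    · rw [min_eq_right h]; nlinarith [norm_nonneg w]
  nlinarith

lemma ssF_integrable {p : ℝ} (h0 : 0 < p) (h1 : p < 1) {w : ℂ} (hw : 0 ≤ w.re) :
    IntegrableOn (ssF p w) (Ioi 0) := by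
  refine Integrable.mono' ((ss_bnd_integrable h0 h1).const_mul (2 * (‖w‖ + 1))) (ssF_meas p w) ?_
  filter_upwards [ae_restrict_mem measurableSet_Ioi] with u hu
  exact ssF_bound p hw hu

noncomputable def ssG (p : ℝ) (w : ℂ) : ℂ := ∫ u in Ioi (0:ℝ), ssF p w u

lemma ssG_hasDerivAt {p : ℝ} (h0 : 0 < p) (h1 : p < 1) {w : ℂ} (hw : 0 < w.re) :
    HasDerivAt (ssG p) (∫ u in Ioi (0:ℝ), ((u ^ (-p) : ℝ) : ℂ) * Complex.exp (-(w * u))) w := by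
  have hs : {z : ℂ | w.re / 2 < z.re} ∈ 𝓝 w :=
    (isOpen_lt continuous_const Complex.continuous_re).mem_nhds (by simp; linarith)
  refine (hasDerivAt_integral_of_dominated_loc_of_deriv_le (F := ssF p)
    (F' := fun (w : ℂ) (u : ℝ) => ((u ^ (-p) : ℝ) : ℂ) * Complex.exp (-(w * u)))
    (bound := fun u => u ^ (-p) * Real.exp (-(w.re/2) * u))
    hs (Eventually.of_forall (ssF_meas p)) (ssF_integrable h0 h1 hw.le) ?_ ?_ ?_ ?_).2
  · refine Measurable.aestronglyMeasurable ?_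
    fun_prop
  · filter_upwards [ae_restrict_mem measurableSet_Ioi] with u hu z hz
    have hu : 0 < u := hu
    have hz : w.re / 2 < z.re := hz
    rw [norm_mul, Complex.norm_real, Complex.norm_exp,
      Real.norm_of_nonneg (Real.rpow_nonneg hu.le _)]
    refine mul_le_mul_of_nonneg_left ?_ (Real.rpow_nonneg hu.le _)
    rw [Real.exp_le_exp]
    simp
    nlinarith
  · have := integrableOn_rpow_mul_exp_neg_mul_rpow (p := 1) (s := -p) (b := w.re / 2)
      (by linarith) one_pos (by linarith)
    simp only [Real.rpow_one] at this
    exact this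
  · filter_upwards [ae_restrict_mem measurableSet_Ioi] with u hu z hz
    have hu : 0 < u := hu
    have h : HasDerivAt (fun z : ℂ => -(z * u)) (-(1 * (u:ℂ))) z :=
      ((hasDerivAt_id z).mul_const (u:ℂ)).neg
    have := ((h.cexp).const_sub 1).const_mul ((u ^ (-1 - p) : ℝ) : ℂ)
    refine this.congr_deriv ?_
    rw [show -p = (-1 - p) + 1 by ring, Real.rpow_add hu, Real.rpow_one]
    push_cast
    ring

lemma ssG_scale {p r : ℝ} (hr : 0 < r) (w : ℂ) :
    ssG p (r * w) = ((r ^ p : ℝ) : ℂ) * ssG p w := by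
  have := integral_comp_mul_left_Ioi (ssF p w) 0 hr
  rw [mul_zero] at this
  unfold ssG
  have h2 : ∫ u in Ioi (0:ℝ), ssF p (r * w) u
      = ∫ u in Ioi (0:ℝ), ((r ^ (1 + p) : ℝ) : ℂ) * ssF p w (r * u) := by
    refine setIntegral_congr_fun measurableSet_Ioi (fun u hu => ?_)
    have hu : 0 < u := hu
    simp only [ssF]
    rw [Real.mul_rpow hr.le hu.le, ← mul_assoc, ← Complex.ofReal_mul, ← mul_assoc,
      ← Real.rpow_add hr, show 1 + p + (-1 - p) = 0 by ring, Real.rpow_zero, one_mul]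
    push_cast
    ring_nf
  rw [h2, integral_const_mul, this, Real.rpow_add hr, Real.rpow_one, Complex.real_smul]
  push_cast
  have : (r:ℂ) ≠ 0 := by exact_mod_cast hr.ne'
  field_simp

lemma ssG_one {p : ℝ} (h0 : 0 < p) (h1 : p < 1) :
    ssG p 1 = ((Real.Gamma (1 - p) / p : ℝ) : ℂ) := by
  have hd := ssG_hasDerivAt h0 h1 (w := ((1:ℝ):ℂ)) (by simp)
  have hd1 := hd.comp_ofReal
  have hd2 : HasDerivAt (fun r : ℝ => ((r ^ p : ℝ) : ℂ) * ssG p 1) ((p : ℂ) * ssG p 1) 1 := by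
    have := (Real.hasDerivAt_rpow_const (x := 1) (p := p) (Or.inl one_ne_zero)).ofReal_comp
    refine (this.mul_const (ssG p 1)).congr_deriv ?_
    simp
  have heq : (fun r : ℝ => ssG p r) =ᶠ[𝓝 1] (fun r : ℝ => ((r ^ p : ℝ) : ℂ) * ssG p 1) := by
    filter_upwards [lt_mem_nhds (zero_lt_one (α := ℝ))] with r hr
    simpa using ssG_scale (p := p) hr 1
  have hu := hd1.unique (hd2.congr_of_eventuallyEq heq)
  have hG : (∫ u in Ioi (0:ℝ), ((u ^ (-p) : ℝ) : ℂ) * Complex.exp (-(((1:ℝ):ℂ) * u)))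
      = ((Real.Gamma (1 - p) : ℝ) : ℂ) := by
    rw [Real.Gamma_eq_integral (by linarith)]
    refine Eq.trans ?_ integral_ofReal
    refine setIntegral_congr_fun measurableSet_Ioi (fun u hu => ?_)
    simp [mul_comm]
  rw [hG] at hu
  have : (p:ℂ) ≠ 0 := by exact_mod_cast h0.ne'
  push_cast
  rw [hu]
  field_simp

lemma ssG_eq {p : ℝ} (h0 : 0 < p) (h1 : p < 1) {w : ℂ} (hw : 0 < w.re) :
    ssG p w = ((Real.Gamma (1 - p) / p : ℝ) : ℂ) * w ^ (p : ℂ) := by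
  have hU : IsOpen {z : ℂ | 0 < z.re} := isOpen_lt continuous_const Complex.continuous_re
  have hf : AnalyticOnNhd ℂ (ssG p) {z : ℂ | 0 < z.re} :=
    DifferentiableOn.analyticOnNhd (fun z hz =>
      (ssG_hasDerivAt h0 h1 hz).differentiableAt.differentiableWithinAt) hU
  have hg : AnalyticOnNhd ℂ (fun w : ℂ => ((Real.Gamma (1 - p) / p : ℝ) : ℂ) * w ^ (p : ℂ))
      {z : ℂ | 0 < z.re} := by
    refine DifferentiableOn.analyticOnNhd (fun z hz => ?_) hU
    refine DifferentiableAt.differentiableWithinAt ?_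
    exact ((differentiableAt_id).cpow_const (Or.inl hz)).const_mul _
  have hpre : IsPreconnected {z : ℂ | 0 < z.re} :=
    (convex_halfSpace_re_gt 0).isPreconnected
  refine hf.eqOn_of_preconnected_of_frequently_eq hg hpre (z₀ := 1) (by simp) ?_ hw
  have hfreq : ∃ᶠ r : ℝ in 𝓝[>] 1, ssG p (r:ℂ) =
      ((Real.Gamma (1 - p) / p : ℝ) : ℂ) * (r:ℂ) ^ (p : ℂ) := by
    refine Eventually.frequently ?_
    filter_upwards [self_mem_nhdsWithin] with r hr
    have hr : 0 < r := lt_trans one_pos hr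
    have := ssG_scale (p := p) hr 1
    rw [mul_one] at this
    rw [this, ssG_one h0 h1, Complex.ofReal_cpow hr.le, mul_comm]
  have ht : Tendsto (fun r : ℝ => (r:ℂ)) (𝓝[>] 1) (𝓝[≠] 1) := by
    refine tendsto_nhdsWithin_iff.2 ⟨?_, ?_⟩
    · exact (Complex.continuous_ofReal.tendsto' 1 1 (by simp)).mono_left nhdsWithin_le_nhds
    · filter_upwards [self_mem_nhdsWithin] with r hr
      have : (1:ℝ) < r := hr
      simp only [mem_compl_iff, mem_singleton_iff]
      exact_mod_cast this.ne'
  exact ht.frequently hfreq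

lemma ssG_eq' {p : ℝ} (h0 : 0 < p) (h1 : p < 1) {w : ℂ} (hw : 0 ≤ w.re) (hw0 : w ≠ 0) :
    ssG p w = ((Real.Gamma (1 - p) / p : ℝ) : ℂ) * w ^ (p : ℂ) := by
  have hwt : Tendsto (fun ε : ℝ => w + ε) (𝓝[>] 0) (𝓝 w) := by
    have : Continuous (fun ε : ℝ => w + ε) := by fun_prop
    exact (this.tendsto' 0 w (by simp)).mono_left nhdsWithin_le_nhds
  have hslit : w ∈ Complex.slitPlane := by
    rcases hw.lt_or_eq with h | h
    · exact Or.inl h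
    · exact Or.inr (fun h' => hw0 (Complex.ext h.symm h'))
  have hR : Tendsto (fun ε : ℝ => ((Real.Gamma (1 - p) / p : ℝ) : ℂ) * (w + ε) ^ (p : ℂ)) (𝓝[>] 0)
      (𝓝 (((Real.Gamma (1 - p) / p : ℝ) : ℂ) * w ^ (p : ℂ))) :=
    (((continuousAt_id.cpow continuousAt_const hslit).tendsto).comp hwt).const_mul _
  have hL : Tendsto (fun ε : ℝ => ssG p (w + ε)) (𝓝[>] 0) (𝓝 (ssG p w)) := by
    refine tendsto_integral_filter_of_dominated_convergence
      (fun u => 2 * (‖w‖ + 1 + 1) * (min u 1 * u ^ (-1 - p))) ?_ ?_ ?_ ?_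
    · exact Eventually.of_forall (fun ε => ssF_meas _ _)
    · filter_upwards [Ioo_mem_nhdsGT (zero_lt_one (α := ℝ))] with ε hε
      filter_upwards [ae_restrict_mem measurableSet_Ioi] with u hu
      have hu : 0 < u := hu
      refine (ssF_bound p (w := w + ε) (by simp; linarith [hε.1]) hu).trans ?_
      have : ‖w + ε‖ ≤ ‖w‖ + 1 := by
        refine (norm_add_le _ _).trans ?_
        rw [Complex.norm_real, Real.norm_of_nonneg hε.1.le]
        linarith [hε.2]
      gcongr
    · exact (ss_bnd_integrable h0 h1).const_mul _
    · filter_upwards with u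
      have : Continuous (fun w => ssF p w u) := by unfold ssF; fun_prop
      exact (this.tendsto w).comp hwt
  refine tendsto_nhds_unique (hL.congr' ?_) hR
  filter_upwards [self_mem_nhdsWithin] with ε hε
  have hε : 0 < ε := hε
  exact ssG_eq h0 h1 (by simp; linarith)

/-- Mellin formula, exponential form. -/
lemma ssG_exp {p : ℝ} (h0 : 0 < p) (h1 : p < 1) {z : ℂ} (hz : |z.im| ≤ Real.pi / 2) :
    ssG p (Complex.exp z) = ((Real.Gamma (1 - p) / p : ℝ) : ℂ) * Complex.exp (p * z) := by
  obtain ⟨h2, h3⟩ := abs_le.1 hz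
  have hpi := Real.pi_pos
  rw [ssG_eq' h0 h1 _ (Complex.exp_ne_zero z), Complex.cpow_def_of_ne_zero (Complex.exp_ne_zero z),
    Complex.log_exp (by linarith) (by linarith), mul_comm z]
  rw [Complex.exp_re]
  have := Real.cos_nonneg_of_mem_Icc (x := z.im) ⟨by linarith, by linarith⟩
  positivity

lemma ss_cos {s : ℝ} (h0 : 0 < s) (h1 : s < 1) (x : ℝ) :
    IntegrableOn (fun k : ℝ => k ^ (-1 - s) * (1 - Real.cos (k * x))) (Ioi 0) ∧
    ∫ k in Ioi (0:ℝ), k ^ (-1 - s) * (1 - Real.cos (k * x)) =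
      |x| ^ s * (Real.Gamma (1 - s) / s * Real.cos (Real.pi / 2 * s)) := by
  have hre : ∀ k : ℝ, (ssF s ((|x| : ℝ) * (-Complex.I)) k).re = k ^ (-1 - s) * (1 - Real.cos (k * x)) := by
    intro k
    unfold ssF
    rw [Complex.re_ofReal_mul, Complex.sub_re, Complex.one_re]
    congr 2
    rw [show -((|x| : ℝ) * (-Complex.I) * (k:ℂ)) = ((k * |x| : ℝ) : ℂ) * Complex.I by push_cast; ring,
      Complex.exp_ofReal_mul_I_re]
    rcases abs_choice x with h | h <;> rw [h]
    rw [mul_neg, Real.cos_neg]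
  have hI := ssF_integrable h0 h1 (w := (|x| : ℝ) * (-Complex.I)) (by simp)
  have hIre : IntegrableOn (fun k => (ssF s ((|x| : ℝ) * (-Complex.I)) k).re) (Ioi 0) := hI.re
  simp only [← hre]
  refine ⟨hIre, ?_⟩
  have h2 : ∫ k in Ioi (0:ℝ), (ssF s ((|x| : ℝ) * (-Complex.I)) k).re
      = (ssG s ((|x| : ℝ) * (-Complex.I))).re := integral_re hI
  rw [h2]
  rcases eq_or_ne x 0 with rfl | hx
  · simp [ssG, ssF, Real.zero_rpow h0.ne']
  · rw [ssG_scale (abs_pos.2 hx), Complex.re_ofReal_mul]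
    have h3 := ssG_exp h0 h1 (z := ((-(Real.pi / 2) : ℝ) : ℂ) * Complex.I) (by
      rw [Complex.im_ofReal_mul]; simp [abs_of_pos (half_pos Real.pi_pos)])
    have h4 : Complex.exp (((-(Real.pi / 2) : ℝ) : ℂ) * Complex.I) = -Complex.I := by
      apply Complex.ext
      · rw [Complex.exp_ofReal_mul_I_re]; simp
      · rw [Complex.exp_ofReal_mul_I_im]; simp
    rw [h4] at h3
    rw [h3, Complex.re_ofReal_mul, ← mul_assoc (s:ℂ), ← Complex.ofReal_mul, Complex.exp_ofReal_mul_I_re]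
    rw [show s * -(Real.pi / 2) = -(Real.pi / 2 * s) by ring, Real.cos_neg]

lemma ss_stab {s α : ℝ} (h0 : 0 < s) (hα : s < α) {z : ℂ} (hz : |z.im| ≤ Real.pi / 2) :
    IntegrableOn (fun k : ℝ => k ^ (-1 - s) *
      (1 - (Complex.exp (-(Complex.exp z * ((k ^ α : ℝ) : ℂ)))).re)) (Ioi 0) ∧
    ∫ k in Ioi (0:ℝ), k ^ (-1 - s) * (1 - (Complex.exp (-(Complex.exp z * ((k ^ α : ℝ) : ℂ)))).re) =
      Real.Gamma (1 - s / α) / s * (Complex.exp ((s / α : ℝ) * z)).re := by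
  have hα0 : 0 < α := h0.trans hα
  have hp0 : 0 < s / α := by positivity
  have hp1 : s / α < 1 := (div_lt_one hα0).2 hα
  have hw : 0 ≤ (Complex.exp z).re := by
    obtain ⟨h2, h3⟩ := abs_le.1 hz
    rw [Complex.exp_re]
    have := Real.cos_nonneg_of_mem_Icc (x := z.im) ⟨by linarith, by linarith⟩
    positivity
  have hI := ssF_integrable hp0 hp1 hw
  have hI2 := (integrableOn_Ioi_comp_rpow_iff (fun u => (ssF (s / α) (Complex.exp z) u).re)
    hα0.ne').2 hI.re
  have hE := integral_comp_rpow_Ioi (fun u => (ssF (s / α) (Complex.exp z) u).re) hα0.ne'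
  have hkey : EqOn (fun x : ℝ => (|α| * x ^ (α - 1)) • (ssF (s / α) (Complex.exp z) (x ^ α)).re)
      (fun k => α * (k ^ (-1 - s) *
      (1 - (Complex.exp (-(Complex.exp z * ((k ^ α : ℝ) : ℂ)))).re))) (Ioi 0) := by
    intro k hk
    have hk : 0 < k := hk
    simp only [ssF, smul_eq_mul]
    rw [Complex.re_ofReal_mul, Complex.sub_re, Complex.one_re, abs_of_pos hα0, ← Real.rpow_mul hk.le,
      mul_assoc, ← mul_assoc (k ^ (α - 1)), ← Real.rpow_add hk]
    rw [show α - 1 + α * (-1 - s / α) = -1 - s by field_simp; ring]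
  have hI3 := hI2.congr_fun hkey measurableSet_Ioi
  rw [setIntegral_congr_fun measurableSet_Ioi hkey, integral_const_mul] at hE
  constructor
  · have := hI3.const_mul α⁻¹
    refine this.congr (Eventually.of_forall fun k => ?_)
    dsimp only
    rw [inv_mul_cancel_left₀ hα0.ne']
  · have h2 : ∫ k in Ioi (0:ℝ), (ssF (s / α) (Complex.exp z) k).re
      = (ssG (s / α) (Complex.exp z)).re := integral_re hI
    rw [h2, ssG_exp hp0 hp1 hz, Complex.re_ofReal_mul] at hE
    have : α ≠ 0 := hα0.ne'
    have hs : s ≠ 0 := h0.ne'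
    rw [← mul_right_inj' this, hE]
    field_simp

lemma ss_moment {Ω : Type*} [MeasureSpace Ω] [IsProbabilityMeasure (ℙ : Measure Ω)]
    {X : Ω → ℝ} (hX : Measurable X) {α : ℝ} {z : ℂ} (hz : |z.im| ≤ Real.pi / 2)
    (hφ : ∀ k : ℝ, 0 < k → (∫ ω, Complex.exp (Complex.I * (k : ℂ) * (X ω : ℂ))) =
      Complex.exp (-(Complex.exp z * ((k ^ α : ℝ) : ℂ))))
    {s : ℝ} (h0 : 0 < s) (h1 : s < 1) (hα : s < α) :
    Integrable (fun ω => |X ω| ^ s) ∧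
    (∫ ω, |X ω| ^ s) * (Real.Gamma (1 - s) * Real.cos (Real.pi / 2 * s)) =
      Real.Gamma (1 - s / α) * (Complex.exp ((s / α : ℝ) * z)).re := by
  set c := Real.Gamma (1 - s) / s * Real.cos (Real.pi / 2 * s) with hc
  have hpi := Real.pi_pos
  have hcpos : 0 < c := by
    have : 0 < Real.Gamma (1 - s) := Real.Gamma_pos_of_pos (by linarith)
    have : 0 < Real.cos (Real.pi / 2 * s) :=
      Real.cos_pos_of_mem_Ioo ⟨by nlinarith, by nlinarith⟩
    positivity
  set R := Real.Gamma (1 - s / α) / s * (Complex.exp ((s / α : ℝ) * z)).re with hR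
  obtain ⟨hsI, hsE⟩ := ss_stab h0 hα hz
  have hφre : ∀ k : ℝ, 0 < k → Integrable (fun ω => k ^ (-1 - s) * (1 - Real.cos (k * X ω))) ∧
      ∫ ω, k ^ (-1 - s) * (1 - Real.cos (k * X ω)) =
      k ^ (-1 - s) * (1 - (Complex.exp (-(Complex.exp z * ((k ^ α : ℝ) : ℂ)))).re) := by
    intro k hk
    have hcosI : Integrable (fun ω => Real.cos (k * X ω)) := by
      refine Integrable.of_bound (C := 1) ?_ ?_
      · exact Measurable.aestronglyMeasurable (by fun_prop)
      · exact Eventually.of_forall fun ω => by simpa using Real.abs_cos_le_one _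
    have hexpI : Integrable (fun ω => Complex.exp (Complex.I * (k : ℂ) * (X ω : ℂ))) := by
      refine Integrable.of_bound (C := 1) ?_ ?_
      · exact Measurable.aestronglyMeasurable (by fun_prop)
      · refine Eventually.of_forall fun ω => ?_
        rw [Complex.norm_exp]; simp
    have hI1 : Integrable (fun ω => 1 - Real.cos (k * X ω)) := (integrable_const _).sub hcosI
    refine ⟨hI1.const_mul _, ?_⟩
    rw [integral_const_mul, integral_sub (integrable_const _) hcosI, ← hφ k hk]
    have : (∫ ω, Complex.exp (Complex.I * (k : ℂ) * (X ω : ℂ))).re = ∫ ω, Real.cos (k * X ω) := by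
      refine (integral_re hexpI).symm.trans ?_
      refine integral_congr_ae (Eventually.of_forall fun ω => ?_)
      change (Complex.exp (Complex.I * (k : ℂ) * (X ω : ℂ))).re = _
      rw [show Complex.I * (k : ℂ) * (X ω : ℂ) = ((k * X ω : ℝ) : ℂ) * Complex.I by push_cast; ring,
        Complex.exp_ofReal_mul_I_re]
    rw [this]
    simp
  have hnn : ∀ k : ℝ, 0 < k → ∀ x : ℝ, 0 ≤ k ^ (-1 - s) * (1 - Real.cos (k * x)) := by
    intro k hk x
    have := Real.cos_le_one (k * x)
    exact mul_nonneg (Real.rpow_nonneg hk.le _) (by linarith)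
  have hT : ∫⁻ ω, ENNReal.ofReal (|X ω| ^ s * c) = ENNReal.ofReal R := by
    calc ∫⁻ ω, ENNReal.ofReal (|X ω| ^ s * c)
        = ∫⁻ ω, ∫⁻ k in Ioi (0:ℝ), ENNReal.ofReal (k ^ (-1 - s) * (1 - Real.cos (k * X ω))) := by
          refine lintegral_congr fun ω => ?_
          obtain ⟨h, h'⟩ := ss_cos h0 h1 (X ω)
          rw [← h', ofReal_integral_eq_lintegral_ofReal h]
          filter_upwards [ae_restrict_mem measurableSet_Ioi] with k hk
          exact hnn k hk _
      _ = ∫⁻ k in Ioi (0:ℝ), ∫⁻ ω, ENNReal.ofReal (k ^ (-1 - s) * (1 - Real.cos (k * X ω))) := by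
          refine lintegral_lintegral_swap ?_
          refine Measurable.aemeasurable ?_
          unfold Function.uncurry
          fun_prop
      _ = ∫⁻ k in Ioi (0:ℝ), ENNReal.ofReal (k ^ (-1 - s) *
            (1 - (Complex.exp (-(Complex.exp z * ((k ^ α : ℝ) : ℂ)))).re)) := by
          refine setLIntegral_congr_fun measurableSet_Ioi fun k hk => ?_
          obtain ⟨h, h'⟩ := hφre k hk
          rw [← h', ofReal_integral_eq_lintegral_ofReal h]
          exact Eventually.of_forall fun ω => hnn k hk _
      _ = ENNReal.ofReal R := by
          rw [hR, ← hsE, ofReal_integral_eq_lintegral_ofReal hsI]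
          filter_upwards [ae_restrict_mem measurableSet_Ioi] with k hk
          rw [← (hφre k hk).2]
          exact integral_nonneg fun ω => hnn k hk _
  have hRnn : 0 ≤ R := by
    rw [hR, ← hsE]
    refine setIntegral_nonneg measurableSet_Ioi fun k hk => ?_
    rw [← (hφre k hk).2]
    exact integral_nonneg fun ω => hnn k hk _
  have hm : Measurable (fun ω => |X ω| ^ s * c) := by fun_prop
  have hnn2 : ∀ ω, 0 ≤ |X ω| ^ s * c := fun ω => by positivity
  have hI : Integrable (fun ω => |X ω| ^ s * c) := by
    refine ⟨hm.aestronglyMeasurable, ?_⟩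
    rw [hasFiniteIntegral_iff_ofReal (Eventually.of_forall hnn2), hT]
    exact ENNReal.ofReal_lt_top
  have hE : ∫ ω, |X ω| ^ s * c = R := by
    rw [integral_eq_lintegral_of_nonneg_ae (Eventually.of_forall hnn2) hm.aestronglyMeasurable, hT,
      ENNReal.toReal_ofReal hRnn]
  constructor
  · have := hI.mul_const c⁻¹
    refine this.congr (Eventually.of_forall fun ω => ?_)
    dsimp only
    rw [mul_inv_cancel_right₀ hcpos.ne']
  · rw [integral_mul_const, hc, hR] at hE
    have hs : s ≠ 0 := h0.ne'
    have h5 := congrArg (fun y => s * y) hE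
    calc _ = s * ((∫ ω, |X ω| ^ s) * (Real.Gamma (1 - s) / s * Real.cos (Real.pi / 2 * s))) := by
          generalize Real.cos (Real.pi / 2 * s) = C
          field_simp
      _ = _ := by
          rw [h5]
          field_simp

lemma ss_shift {k : ℕ} (hk : k ≠ 0) {a : ℝ} (h : HasSum (fun n : ℕ => (1:ℝ) / (n:ℝ) ^ k) a) :
    HasSum (fun n : ℕ => (1:ℝ) / ((n:ℝ) + 1) ^ k) a := by
  have := (hasSum_nat_add_iff' (f := fun n : ℕ => (1:ℝ) / (n:ℝ) ^ k) 1).2 h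
  simpa [hk] using this

lemma ss_zeta3 : HasSum (fun n : ℕ => (1:ℝ) / (n:ℝ) ^ 3) (zetaR 3) := by
  have hs : Summable (fun n : ℕ => (1:ℝ) / (n:ℝ) ^ 3) := Real.summable_one_div_nat_pow.2 (by norm_num)
  have : zetaR 3 = ∑' n : ℕ, (1:ℝ) / (n:ℝ) ^ 3 := by
    unfold zetaR
    have h := zeta_nat_eq_tsum_of_gt_one (k := 3) (by norm_num)
    have h2 : ((3:ℝ):ℂ) = ((3:ℕ):ℂ) := by norm_num
    rw [h2, h, ← Complex.ofReal_re (∑' n : ℕ, (1:ℝ) / (n:ℝ) ^ 3), Complex.ofReal_tsum]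
    push_cast
    rfl
  rw [this]
  exact hs.hasSum

lemma ss_logGamma : ∃ K : ℝ, ∀ x : ℝ, |x| ≤ 1 / 2 →
    |Real.log (Real.Gamma (1 - x)) - (Real.eulerMascheroniConstant * x + Real.pi ^ 2 / 12 * x ^ 2
      + zetaR 3 / 3 * x ^ 3 + Real.pi ^ 4 / 360 * x ^ 4)| ≤ K * |x| ^ 5 := by
  have z2 := ss_shift two_ne_zero hasSum_zeta_two
  have z3 := ss_shift three_ne_zero ss_zeta3
  have z4 := ss_shift four_ne_zero hasSum_zeta_four
  refine ⟨2 * (Real.pi ^ 2 / 6), fun x hx => ?_⟩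
  obtain ⟨hx1, hx2⟩ := abs_le.1 hx
  have hG : Tendsto (Real.BohrMollerup.logGammaSeq (1 - x)) atTop
      (𝓝 (Real.log (Real.Gamma (1 - x)))) := by
    have := Real.BohrMollerup.tendsto_logGammaSeq (x := 1 - x) Real.convexOn_log_Gamma
      (fun {y} hy => by
        simp only [Function.comp]
        rw [Real.Gamma_add_one hy.ne', Real.log_mul hy.ne' (Real.Gamma_pos_of_pos hy).ne', add_comm])
      (by linarith)
    simpa using this
  let A : ℕ → ℝ := fun n => (1 - x) * (Real.log n - Real.log (n + 1)) +
    x * ((harmonic (n + 1) : ℝ) - Real.log ((n + 1 : ℕ) : ℝ)) +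
    x ^ 2 / 2 * ∑ m ∈ Finset.range (n + 1), (1:ℝ) / ((m:ℝ) + 1) ^ 2 +
    x ^ 3 / 3 * ∑ m ∈ Finset.range (n + 1), (1:ℝ) / ((m:ℝ) + 1) ^ 3 +
    x ^ 4 / 4 * ∑ m ∈ Finset.range (n + 1), (1:ℝ) / ((m:ℝ) + 1) ^ 4
  have hA : Tendsto A atTop (𝓝 (Real.eulerMascheroniConstant * x + Real.pi ^ 2 / 12 * x ^ 2
      + zetaR 3 / 3 * x ^ 3 + Real.pi ^ 4 / 360 * x ^ 4)) := by
    have t0 : Tendsto (fun n : ℕ => Real.log n - Real.log (n + 1)) atTop (𝓝 0) := by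
      have := Real.tendsto_log_nat_add_one_sub_log.neg
      simpa using this
    have hs := tendsto_add_atTop_nat 1
    have t1 := Real.tendsto_harmonic_sub_log.comp hs
    have t2 := z2.tendsto_sum_nat.comp hs
    have t3 := z3.tendsto_sum_nat.comp hs
    have t4 := z4.tendsto_sum_nat.comp hs
    have := ((((t0.const_mul (1 - x)).add (t1.const_mul x)).add (t2.const_mul (x ^ 2 / 2))).add
      (t3.const_mul (x ^ 3 / 3))).add (t4.const_mul (x ^ 4 / 4))
    refine (this.congr fun n => ?_).trans (le_of_eq ?_)
    · simp only [A, Function.comp]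
    · congr 1; ring
  refine le_of_tendsto (hG.sub hA).abs (Eventually.of_forall fun n => ?_)
  have hterm : Real.BohrMollerup.logGammaSeq (1 - x) n - A n =
      -∑ m ∈ Finset.range (n + 1), (∑ i ∈ Finset.range 4, (x / ((m:ℝ) + 1)) ^ (i + 1) / ((i:ℝ) + 1)
        + Real.log (1 - x / ((m:ℝ) + 1))) := by
    have h1 : ∀ m : ℕ, Real.log (1 - x + m) = Real.log ((m:ℝ) + 1) +
        Real.log (1 - x / ((m:ℝ) + 1)) := by
      intro m
      have hm : (0:ℝ) < (m:ℝ) + 1 := by positivity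
      have hm' : (1:ℝ) ≤ (m:ℝ) + 1 := by simp
      have : x / ((m:ℝ) + 1) < 1 := by rw [div_lt_one hm]; linarith
      rw [← Real.log_mul hm.ne' (by linarith)]
      congr 1
      field_simp
      ring
    have h2 : ∑ m ∈ Finset.range (n + 1), Real.log ((m:ℝ) + 1) =
        Real.log (n + 1) + Real.log (n.factorial) := by
      rw [← Real.log_prod (fun i _ => by positivity)]
      have := Finset.prod_range_add_one_eq_factorial (n + 1)
      have h3 : ∏ i ∈ Finset.range (n + 1), ((i:ℝ) + 1) = ((n + 1).factorial : ℝ) := by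
        rw [← this]; push_cast; rfl
      rw [h3, Nat.factorial_succ]
      push_cast
      rw [Real.log_mul (by positivity) (by positivity)]
    have h4 : (harmonic (n + 1) : ℝ) = ∑ m ∈ Finset.range (n + 1), (1:ℝ) / ((m:ℝ) + 1) := by
      simp [harmonic]
    simp only [Real.BohrMollerup.logGammaSeq, A, h1, Finset.sum_add_distrib, h2, h4,
      Finset.sum_range_succ _ 3, Finset.sum_range_succ _ 2, Finset.sum_range_succ _ 1,
      Finset.sum_range_one, div_pow, Nat.cast_zero, Nat.cast_one, Nat.cast_ofNat]
    have h5 : ∀ k : ℕ, ∀ c : ℝ, ∑ m ∈ Finset.range (n + 1), x ^ k / ((m:ℝ) + 1) ^ k / c =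
        x ^ k / c * ∑ m ∈ Finset.range (n + 1), (1:ℝ) / ((m:ℝ) + 1) ^ k := by
      intro k c
      rw [Finset.mul_sum]
      refine Finset.sum_congr rfl fun m _ => ?_
      ring
    simp only [h5]
    push_cast
    simp only [zero_add, pow_one]
    ring
  rw [hterm, abs_neg]
  refine (Finset.abs_sum_le_sum_abs _ _).trans ?_
  have hb : ∀ m ∈ Finset.range (n + 1), |∑ i ∈ Finset.range 4, (x / ((m:ℝ) + 1)) ^ (i + 1) / ((i:ℝ) + 1)
        + Real.log (1 - x / ((m:ℝ) + 1))| ≤ 2 * |x| ^ 5 * (1 / ((m:ℝ) + 1) ^ 2) := by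
    intro m _
    have hm : (1:ℝ) ≤ (m:ℝ) + 1 := by simp
    have hy : |x / ((m:ℝ) + 1)| = |x| / ((m:ℝ) + 1) := by
      rw [abs_div, abs_of_pos (by linarith : (0:ℝ) < (m:ℝ) + 1)]
    have hy2 : |x| / ((m:ℝ) + 1) ≤ 1 / 2 := (div_le_self (abs_nonneg x) hm).trans hx
    refine (Real.abs_log_sub_add_sum_range_le (by rw [hy]; linarith) 4).trans ?_
    rw [hy, div_le_iff₀ (by linarith), div_pow]
    have e1 : |x| ^ 5 / ((m:ℝ) + 1) ^ 5 ≤ |x| ^ 5 * (1 / ((m:ℝ) + 1) ^ 2) := by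
      rw [div_eq_mul_one_div]
      gcongr
      norm_num
    have e2 : 0 ≤ |x| ^ 5 * (1 / ((m:ℝ) + 1) ^ 2) := by positivity
    refine e1.trans ?_
    nlinarith
  refine (Finset.sum_le_sum hb).trans ?_
  rw [← Finset.mul_sum]
  have : ∑ m ∈ Finset.range (n + 1), (1:ℝ) / ((m:ℝ) + 1) ^ 2 ≤ Real.pi ^ 2 / 6 :=
    sum_le_hasSum _ (fun i _ => by positivity) z2
  nlinarith [pow_nonneg (abs_nonneg x) 5]

lemma ss_exp_bound (y : ℝ) :
    |Real.exp y - (1 + y + y ^ 2 / 2 + y ^ 3 / 6 + y ^ 4 / 24)| ≤ |y| ^ 5 * (6 + 6 * Real.exp y) := by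
  have hgen : |Real.exp y - (1 + y + y ^ 2 / 2 + y ^ 3 / 6 + y ^ 4 / 24)| ≤ |y| ^ 5 * Real.exp |y| := by
    have h := Complex.norm_exp_sub_sum_le_norm_mul_exp (y : ℂ) 5
    have e : Complex.exp (y:ℂ) - ∑ m ∈ Finset.range 5, (y:ℂ) ^ m / (m.factorial : ℂ) =
        ((Real.exp y - (1 + y + y ^ 2 / 2 + y ^ 3 / 6 + y ^ 4 / 24) : ℝ) : ℂ) := by
      simp [Finset.sum_range_succ, Nat.factorial]
    rw [e, Complex.norm_real, Complex.norm_real] at h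
    exact h
  have h5 : 0 ≤ |y| ^ 5 := by positivity
  have he := Real.exp_pos y
  rcases le_total 0 y with h | h
  · refine hgen.trans (mul_le_mul_of_nonneg_left ?_ h5)
    rw [abs_of_nonneg h]; linarith
  · rcases le_total (-1) y with h' | h'
    · refine hgen.trans (mul_le_mul_of_nonneg_left ?_ h5)
      have : Real.exp |y| ≤ Real.exp 1 := Real.exp_le_exp.2 (by rw [abs_of_nonpos h]; linarith)
      have := Real.exp_one_lt_d9
      linarith
    · have h1 : 1 ≤ |y| := by rw [abs_of_nonpos h]; linarith
      have e1 : Real.exp y ≤ 1 := Real.exp_le_one_iff.2 h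
      have p1 : |y| ≤ |y| ^ 5 := le_self_pow₀ h1 (by norm_num)
      have p2 : |y| ^ 2 ≤ |y| ^ 5 := pow_le_pow_right₀ h1 (by norm_num)
      have p3 : |y| ^ 3 ≤ |y| ^ 5 := pow_le_pow_right₀ h1 (by norm_num)
      have p4 : |y| ^ 4 ≤ |y| ^ 5 := pow_le_pow_right₀ h1 (by norm_num)
      have p0 : 1 ≤ |y| ^ 5 := one_le_pow₀ h1
      have q2 : y ^ 2 = |y| ^ 2 := (sq_abs y).symm
      have q4 : y ^ 4 = |y| ^ 4 := by rw [show y ^ 4 = (y ^ 2) ^ 2 by ring, q2]; ring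
      have q1 : y = -|y| := by rw [abs_of_nonpos h]; ring
      have q3 : y ^ 3 = -|y| ^ 3 := by rw [abs_of_nonpos h]; ring
      rw [q2, q3, q4]
      have p5 : 0 ≤ |y| ^ 5 * Real.exp y := by positivity
      have p6 : 0 ≤ |y| ^ 2 := by positivity
      have p7 : 0 ≤ |y| ^ 3 := by positivity
      have p8 : 0 ≤ |y| ^ 4 := by positivity
      rw [abs_le]
      constructor <;> nlinarith

lemma ss_cos_O (c : ℝ) : (fun s : ℝ => Real.cos (c * s) - (1 - (c * s) ^ 2 / 2 + (c * s) ^ 4 / 24))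
    =O[𝓝[>] 0] (fun s : ℝ => s ^ 5) := by
  have hb : ∀ x : ℝ, |Real.cos x - (1 - x ^ 2 / 2 + x ^ 4 / 24)| ≤ |x| ^ 5 * Real.exp |x| := by
    intro x
    have h := Complex.norm_exp_sub_sum_le_norm_mul_exp ((x : ℂ) * Complex.I) 5
    have h2 := (Complex.abs_re_le_norm _).trans h
    have e : (Complex.exp ((x:ℂ) * Complex.I) -
        ∑ m ∈ Finset.range 5, ((x:ℂ) * Complex.I) ^ m / (m.factorial : ℂ)).re =
        Real.cos x - (1 - x ^ 2 / 2 + x ^ 4 / 24) := by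
      have : ∑ m ∈ Finset.range 5, ((x:ℂ) * Complex.I) ^ m / (m.factorial : ℂ) =
        ((1 - x ^ 2 / 2 + x ^ 4 / 24 : ℝ) : ℂ) + ((x - x ^ 3 / 6 : ℝ) : ℂ) * Complex.I := by
        simp only [Finset.sum_range_succ, Finset.sum_range_zero, Nat.factorial, mul_pow,
          Complex.I_sq, show Complex.I ^ 3 = -Complex.I by simp [pow_succ],
          show Complex.I ^ 4 = 1 by simp [pow_succ]]
        push_cast
        ring
      rw [this, Complex.sub_re, Complex.exp_ofReal_mul_I_re, Complex.add_re, Complex.ofReal_re,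
        Complex.re_ofReal_mul]
      simp
    rw [e] at h2
    simpa using h2
  refine Asymptotics.IsBigO.of_bound (|c| ^ 5 * Real.exp |c|) ?_
  filter_upwards [Ioo_mem_nhdsGT (zero_lt_one (α := ℝ))] with s hs
  rw [Real.norm_eq_abs, Real.norm_eq_abs, abs_of_pos (pow_pos hs.1 5)]
  refine (hb _).trans ?_
  rw [abs_mul, mul_pow, abs_of_pos hs.1]
  have : Real.exp (|c| * s) ≤ Real.exp |c| :=
    Real.exp_le_exp.2 (mul_le_of_le_one_right (abs_nonneg c) hs.2.le)
  have h0 : 0 ≤ |c| ^ 5 * s ^ 5 := mul_nonneg (by positivity) (pow_pos hs.1 5).le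
  nlinarith

lemma ss_mgf {Ω : Type*} [MeasureSpace Ω] [IsProbabilityMeasure (ℙ : Measure Ω)]
    {Y : Ω → ℝ} (hY : Measurable Y) (hp : ∀ p : ℕ, Integrable (fun ω => |Y ω| ^ p)) {t : ℝ} (ht : 0 < t)
    (hI : ∀ s, 0 < s → s ≤ t → Integrable (fun ω => Real.exp (s * Y ω))) :
    (fun s : ℝ => (∫ ω, Real.exp (s * Y ω)) - (1 + (∫ ω, Y ω) * s + (∫ ω, Y ω ^ 2) / 2 * s ^ 2
      + (∫ ω, Y ω ^ 3) / 6 * s ^ 3 + (∫ ω, Y ω ^ 4) / 24 * s ^ 4))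
    =O[𝓝[>] 0] (fun s : ℝ => s ^ 5) := by
  have hp' : ∀ p : ℕ, Integrable (fun ω => Y ω ^ p) := fun p => by
    refine (hp p).mono' (hY.pow_const p).aestronglyMeasurable (Eventually.of_forall fun ω => ?_)
    rw [norm_pow, Real.norm_eq_abs]
  set K : ℝ := 120 * (2 / t) ^ 5 with hK
  set D : Ω → ℝ := fun ω => 18 * |Y ω| ^ 5 + 6 * K * Real.exp (t * Y ω) with hD
  have hDI : Integrable D := ((hp 5).const_mul 18).add ((hI t ht le_rfl).const_mul (6 * K))
  have hKpos : 0 < K := by positivity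
  refine Asymptotics.IsBigO.of_bound (∫ ω, D ω) ?_
  filter_upwards [Ioo_mem_nhdsGT (half_pos ht)] with s hs
  have hs0 : 0 < s := hs.1
  have hst : s < t / 2 := hs.2
  have h1 := hp' 1
  simp only [pow_one] at h1
  have hexp := hI s hs0 (by linarith)
  have hpoly : ∫ ω, (1 + s * Y ω + (s * Y ω) ^ 2 / 2 + (s * Y ω) ^ 3 / 6 + (s * Y ω) ^ 4 / 24) =
      (1 + (∫ ω, Y ω) * s + (∫ ω, Y ω ^ 2) / 2 * s ^ 2
      + (∫ ω, Y ω ^ 3) / 6 * s ^ 3 + (∫ ω, Y ω ^ 4) / 24 * s ^ 4) := by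
    have i0 : Integrable (fun _ : Ω => (1:ℝ)) := integrable_const _
    have i1 := h1.const_mul s
    have i2 := (hp' 2).const_mul (s ^ 2 / 2)
    have i3 := (hp' 3).const_mul (s ^ 3 / 6)
    have i4 := (hp' 4).const_mul (s ^ 4 / 24)
    have e : (fun ω => 1 + s * Y ω + (s * Y ω) ^ 2 / 2 + (s * Y ω) ^ 3 / 6 + (s * Y ω) ^ 4 / 24) =
      fun ω => (((1 + s * Y ω) + s ^ 2 / 2 * Y ω ^ 2) + s ^ 3 / 6 * Y ω ^ 3) + s ^ 4 / 24 * Y ω ^ 4 := by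
      funext ω; ring
    have j1 : Integrable (fun ω => 1 + s * Y ω) := i0.add i1
    have j2 : Integrable (fun ω => 1 + s * Y ω + s ^ 2 / 2 * Y ω ^ 2) := j1.add i2
    have j3 : Integrable (fun ω => 1 + s * Y ω + s ^ 2 / 2 * Y ω ^ 2 + s ^ 3 / 6 * Y ω ^ 3) := j2.add i3
    rw [e, integral_add j3 i4, integral_add j2 i3, integral_add j1 i2, integral_add i0 i1]
    simp only [integral_const_mul, integral_const]
    simp
    ring
  have hpolyI : Integrable (fun ω => 1 + s * Y ω + (s * Y ω) ^ 2 / 2 + (s * Y ω) ^ 3 / 6 + (s * Y ω) ^ 4 / 24) := by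
    have e : (fun ω => 1 + s * Y ω + (s * Y ω) ^ 2 / 2 + (s * Y ω) ^ 3 / 6 + (s * Y ω) ^ 4 / 24) =
      fun ω => (((1 + s * Y ω) + s ^ 2 / 2 * Y ω ^ 2) + s ^ 3 / 6 * Y ω ^ 3) + s ^ 4 / 24 * Y ω ^ 4 := by
      funext ω; ring
    rw [e]
    exact (((((integrable_const _).add (h1.const_mul s)).add ((hp' 2).const_mul (s ^ 2 / 2))).add
      ((hp' 3).const_mul (s ^ 3 / 6))).add ((hp' 4).const_mul (s ^ 4 / 24)))
  rw [← hpoly, ← integral_sub hexp hpolyI, mul_comm, Real.norm_of_nonneg (pow_pos hs0 5).le,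
    ← integral_const_mul]
  refine norm_integral_le_of_norm_le (hDI.const_mul _) (Eventually.of_forall fun ω => ?_)
  rw [Real.norm_eq_abs]
  refine (ss_exp_bound _).trans ?_
  rw [abs_mul, mul_pow, abs_of_pos hs0, mul_assoc]
  refine mul_le_mul_of_nonneg_left ?_ (pow_pos hs0 5).le
  simp only [hD]
  have ha : 0 ≤ |Y ω| ^ 5 := by positivity
  rcases le_total (Y ω) 0 with h | h
  · have : Real.exp (s * Y ω) ≤ 1 := Real.exp_le_one_iff.2 (by nlinarith)
    have := Real.exp_pos (t * Y ω)
    have : 0 < 6 * K * Real.exp (t * Y ω) := by positivity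
    nlinarith
  · rw [abs_of_nonneg h] at *
    have e1 : Real.exp (s * Y ω) ≤ Real.exp (t / 2 * Y ω) := Real.exp_le_exp.2 (by nlinarith)
    have e2 := Real.pow_div_factorial_le_exp (t / 2 * Y ω) (by positivity) 5
    have e3 : Y ω ^ 5 ≤ K * Real.exp (t / 2 * Y ω) := by
      have : Y ω ^ 5 = K * ((t / 2 * Y ω) ^ 5 / (Nat.factorial 5 : ℕ)) := by
        simp only [hK, Nat.factorial]
        push_cast
        field_simp
      rw [this]
      exact mul_le_mul_of_nonneg_left e2 hKpos.le
    have e4 : Real.exp (t * Y ω) = Real.exp (t / 2 * Y ω) * Real.exp (t / 2 * Y ω) := by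
      rw [← Real.exp_add]; ring_nf
    have e5 : Y ω ^ 5 * Real.exp (s * Y ω) ≤
        (K * Real.exp (t / 2 * Y ω)) * Real.exp (t / 2 * Y ω) := by gcongr
    rw [e4]
    nlinarith

lemma ss_coeff_step {n : ℕ} {c : ℝ} {g : ℝ → ℝ} (hg : Continuous g)
    (h : (fun s : ℝ => c + s * g s) =O[𝓝[>] 0] (fun s : ℝ => s ^ (n + 1))) :
    c = 0 ∧ g =O[𝓝[>] 0] (fun s : ℝ => s ^ n) := by
  have h1 : Tendsto (fun s : ℝ => c + s * g s) (𝓝[>] 0) (𝓝 c) := by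
    have : Continuous (fun s : ℝ => c + s * g s) := by fun_prop
    exact (this.tendsto' 0 c (by simp)).mono_left nhdsWithin_le_nhds
  have h2 : Tendsto (fun s : ℝ => c + s * g s) (𝓝[>] 0) (𝓝 0) := by
    refine h.trans_tendsto ?_
    have : Continuous (fun s : ℝ => s ^ (n + 1)) := by fun_prop
    exact (this.tendsto' 0 0 (by simp)).mono_left nhdsWithin_le_nhds
  have hc : c = 0 := tendsto_nhds_unique h1 h2
  refine ⟨hc, ?_⟩
  obtain ⟨C, hC⟩ := h.bound
  refine Asymptotics.IsBigO.of_bound C ?_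
  filter_upwards [hC, self_mem_nhdsWithin] with s hs hpos
  have hpos : 0 < s := hpos
  rw [hc, zero_add, norm_mul, pow_succ, norm_mul, ← mul_assoc, mul_comm ‖s‖] at hs
  exact le_of_mul_le_mul_right hs (norm_pos_iff.2 hpos.ne')

lemma ss_coeff {c0 c1 c2 c3 c4 : ℝ} {r : ℝ → ℝ} (hr : Continuous r)
    (h : (fun s : ℝ => c0 + s * (c1 + s * (c2 + s * (c3 + s * (c4 + s * r s)))))
      =O[𝓝[>] 0] (fun s : ℝ => s ^ 5)) : c1 = 0 ∧ c2 = 0 ∧ c3 = 0 ∧ c4 = 0 := by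
  obtain ⟨_, h⟩ := ss_coeff_step (by fun_prop) h
  obtain ⟨h1, h⟩ := ss_coeff_step (by fun_prop) h
  obtain ⟨h2, h⟩ := ss_coeff_step (by fun_prop) h
  obtain ⟨h3, h⟩ := ss_coeff_step (by fun_prop) h
  obtain ⟨h4, h⟩ := ss_coeff_step (by fun_prop) h
  exact ⟨h1, h2, h3, h4⟩

lemma ss_tendsto {f : ℝ → ℝ} (hf : Continuous f) : Tendsto f (𝓝[>] 0) (𝓝 (f 0)) :=
  hf.continuousAt.tendsto.mono_left nhdsWithin_le_nhds

lemma ss_bdd {f : ℝ → ℝ} (hf : Continuous f) : f =O[𝓝[>] 0] (fun _ => (1:ℝ)) :=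
  (ss_tendsto hf).isBigO_one ℝ

lemma ss_mul_O {f g p q : ℝ → ℝ} (hp : Continuous p) (hq : Continuous q)
    (hf : (fun s => f s - p s) =O[𝓝[>] 0] (fun s : ℝ => s ^ 5))
    (hg : (fun s => g s - q s) =O[𝓝[>] 0] (fun s : ℝ => s ^ 5)) :
    (fun s => f s * g s - p s * q s) =O[𝓝[>] 0] (fun s : ℝ => s ^ 5) := by
  have h5 : (fun s : ℝ => s ^ 5) =O[𝓝[>] 0] (fun _ => (1:ℝ)) := ss_bdd (by fun_prop)
  have hg1 : g =O[𝓝[>] 0] (fun _ => (1:ℝ)) := by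
    have := (hg.trans h5).add (ss_bdd hq)
    simpa using this
  have a := hf.mul hg1
  have b := (ss_bdd hp).mul hg
  simp only [mul_one, one_mul] at a b
  refine (a.add b).congr_left fun s => ?_
  ring

lemma ss_exp_O {L : ℝ → ℝ} {a b c d : ℝ}
    (hL : (fun s => L s - (a * s + b * s ^ 2 + c * s ^ 3 + d * s ^ 4)) =O[𝓝[>] 0] (fun s : ℝ => s ^ 5)) :
    (fun s => Real.exp (L s) - (1 + a * s + (a ^ 2 / 2 + b) * s ^ 2 + (a ^ 3 / 6 + a * b + c) * s ^ 3
      + (a ^ 4 / 24 + a ^ 2 * b / 2 + b ^ 2 / 2 + a * c + d) * s ^ 4))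
      =O[𝓝[>] 0] (fun s : ℝ => s ^ 5) := by
  set P : ℝ → ℝ := fun s => a * s + b * s ^ 2 + c * s ^ 3 + d * s ^ 4 with hP
  have hPc : Continuous P := by fun_prop
  -- exp L - exp P
  have h1 : (fun s => Real.exp (L s) - Real.exp (P s)) =O[𝓝[>] 0] (fun s : ℝ => s ^ 5) := by
    have ht : Tendsto (fun s => L s - P s) (𝓝[>] 0) (𝓝 0) :=
      hL.trans_tendsto (by
        have := ss_tendsto (f := fun s => s ^ 5) (by fun_prop)
        norm_num at this
        exact this)
    have hd : (fun y : ℝ => Real.exp y - 1) =O[𝓝 0] (fun y => y) := by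
      have := (Real.hasDerivAt_exp 0).isBigO_sub
      simpa using this
    have h2 := (hd.comp_tendsto ht).trans hL
    have h3 := (ss_bdd (f := fun s => Real.exp (P s)) (by fun_prop)).mul h2
    simp only [one_mul] at h3
    refine h3.congr_left fun s => ?_
    simp only [Function.comp]
    rw [mul_sub, ← Real.exp_add]
    ring_nf
  have h2 : (fun s => Real.exp (P s) - (1 + P s + P s ^ 2 / 2 + P s ^ 3 / 6 + P s ^ 4 / 24))
      =O[𝓝[>] 0] (fun s : ℝ => s ^ 5) := by
    have e1 : (fun s => Real.exp (P s) - (1 + P s + P s ^ 2 / 2 + P s ^ 3 / 6 + P s ^ 4 / 24))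
      =O[𝓝[>] 0] (fun s => P s ^ 5 * (6 + 6 * Real.exp (P s))) := by
      refine Asymptotics.IsBigO.of_bound 1 (Eventually.of_forall fun s => ?_)
      rw [one_mul, norm_mul, norm_pow, Real.norm_eq_abs, Real.norm_eq_abs, Real.norm_eq_abs,
        abs_of_pos (by positivity : 0 < 6 + 6 * Real.exp (P s))]
      exact ss_exp_bound _
    have e2 := (Asymptotics.isBigO_refl (fun s : ℝ => s ^ 5) (𝓝[>] 0)).mul
      (ss_bdd (f := fun s => (a + b * s + c * s ^ 2 + d * s ^ 3) ^ 5 * (6 + 6 * Real.exp (P s)))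
        (by fun_prop))
    simp only [mul_one] at e2
    refine e1.trans (e2.congr_left fun s => ?_)
    simp only [hP]
    ring
  have h3 : (fun s => (1 + P s + P s ^ 2 / 2 + P s ^ 3 / 6 + P s ^ 4 / 24) -
      (1 + a * s + (a ^ 2 / 2 + b) * s ^ 2 + (a ^ 3 / 6 + a * b + c) * s ^ 3
      + (a ^ 4 / 24 + a ^ 2 * b / 2 + b ^ 2 / 2 + a * c + d) * s ^ 4))
      =O[𝓝[>] 0] (fun s : ℝ => s ^ 5) := by
    -- divide by s ^ 5 through the tail of P
    set Q : ℝ → ℝ := fun s => b + c * s + d * s ^ 2 with hQ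
    have e2 := (Asymptotics.isBigO_refl (fun s : ℝ => s ^ 5) (𝓝[>] 0)).mul
      (ss_bdd (f := fun s => b * d + c ^ 2 / 2 + c * d * s + d ^ 2 * s ^ 2 / 2
        + (a ^ 2 * (c + d * s) / 2 + a * Q s ^ 2 / 2 + s * Q s ^ 3 / 6)
        + (a ^ 3 * Q s / 6 + a ^ 2 * s * Q s ^ 2 / 4 + a * s ^ 2 * Q s ^ 3 / 6 + s ^ 3 * Q s ^ 4 / 24)
        + (a * d + b * c - b * d + (s * 0) - c ^ 2 / 2 + c ^ 2 / 2 * s + b * d * s - c * d * s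
          + c * d * s ^ 2 - d ^ 2 * s ^ 2 / 2 + d ^ 2 * s ^ 3 / 2))
        (by fun_prop))
    simp only [mul_one] at e2
    refine e2.congr_left fun s => ?_
    simp only [hP, hQ]
    ring
  refine ((h1.add h2).add h3).congr_left fun s => ?_
  ring

lemma ss_logGamma_O (β : ℝ) :
    (fun s : ℝ => Real.log (Real.Gamma (1 - β * s)) - (Real.eulerMascheroniConstant * (β * s)
      + Real.pi ^ 2 / 12 * (β * s) ^ 2 + zetaR 3 / 3 * (β * s) ^ 3 + Real.pi ^ 4 / 360 * (β * s) ^ 4))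
    =O[𝓝[>] 0] (fun s : ℝ => s ^ 5) := by
  obtain ⟨K, hK⟩ := ss_logGamma
  refine Asymptotics.IsBigO.of_bound (K * |β| ^ 5) ?_
  have : ∀ᶠ s : ℝ in 𝓝[>] 0, |β * s| < 1 / 2 := by
    have := ss_tendsto (f := fun s => |β * s|) (by fun_prop)
    simp only [mul_zero, abs_zero] at this
    exact this.eventually (gt_mem_nhds (by norm_num))
  filter_upwards [this] with s hs
  have := hK _ hs.le
  rw [Real.norm_eq_abs, Real.norm_eq_abs, abs_pow]
  refine this.trans (le_of_eq ?_)
  rw [abs_mul, mul_pow, mul_assoc]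

theorem fourth_log_moment_of_strictlyStable {Ω : Type*} [MeasureSpace Ω]
    [IsProbabilityMeasure (ℙ : Measure Ω)] (X : Ω → ℝ) (ν θ τ : ℝ)
    (hX : IsStrictlyStable X ν θ τ)
    (DV : ℝ) (hDV : DV = Real.pi ^ 2 / 4 * (1 - θ ^ 2) + Real.pi ^ 2 / 6 * (ν - 1)) :
    (∫ ω, (Real.log |X ω|) ^ 4) =
      τ ^ 4 + 6 * τ ^ 2 * DV + 8 * τ * zetaR 3 * (ν ^ ((3 : ℝ) / 2) - 1) + 3 * DV ^ 2
        + Real.pi ^ 4 * ((1 - θ ^ 4) / 8 + (ν ^ 2 - 1) / 15) := by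
  obtain ⟨hXm, hν, hθ, hX0, hlog, hchar⟩ := hX
  have hpi := Real.pi_pos
  have hν0 : 0 < ν := by linarith
  set β : ℝ := Real.sqrt ν with hβ
  have hβ0 : 0 < β := Real.sqrt_pos.2 hν0
  have hβ2 : β ^ 2 = ν := Real.sq_sqrt hν0.le
  set α : ℝ := ν ^ (-(1/2) : ℝ) with hαdef
  have hαβ : α = β⁻¹ := by
    rw [hαdef, hβ, Real.sqrt_eq_rpow, Real.rpow_neg hν0.le]
  have hα0 : 0 < α := by rw [hαβ]; positivity
  have hα1 : α * β = 1 := by rw [hαβ]; field_simp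
  have hν32 : ν ^ ((3:ℝ) / 2) = β ^ 3 := by
    rw [hβ, Real.sqrt_eq_rpow, ← Real.rpow_natCast, ← Real.rpow_mul hν0.le]
    norm_num
  set C := Real.eulerMascheroniConstant with hC
  set z : ℂ := (α : ℂ) * ((τ : ℂ) - Complex.I * ((Real.pi / 2 : ℝ) : ℂ) * (θ : ℂ)) +
    (C : ℂ) * ((α : ℂ) - 1) with hzdef
  have hz' : z = ((α * τ + C * (α - 1) : ℝ) : ℂ) + ((-(α * (Real.pi / 2 * θ)) : ℝ) : ℂ) * Complex.I := by
    rw [hzdef]; push_cast; ring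
  have hzim : z.im = -(α * (Real.pi / 2 * θ)) := by
    rw [hz']; simp
  have hαθ : |α * θ| ≤ 1 := by
    have h1 := hθ.trans (min_le_left _ _)
    have h2 := hθ.trans (min_le_right _ _)
    rw [abs_mul, abs_of_pos hα0]
    rcases le_total α 1 with h | h
    · nlinarith [abs_nonneg θ]
    · have : α * |θ| ≤ α * (2 * β - 1) := mul_le_mul_of_nonneg_left h2 hα0.le
      nlinarith
  have hz : |z.im| ≤ Real.pi / 2 := by
    rw [hzim, abs_neg, show α * (Real.pi / 2 * θ) = Real.pi / 2 * (α * θ) by ring, abs_mul,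
      abs_of_pos (half_pos hpi)]
    nlinarith
  have hφ : ∀ k : ℝ, 0 < k → (∫ ω, Complex.exp (Complex.I * (k : ℂ) * (X ω : ℂ))) =
      Complex.exp (-(Complex.exp z * ((k ^ α : ℝ) : ℂ))) := by
    intro k hk
    rw [hchar k hk.ne', Real.sign_of_pos hk, abs_of_pos hk, Real.rpow_def_of_pos hk,
      Complex.ofReal_exp, ← Complex.exp_add, hzdef]
    congr 3
    push_cast
    ring
  set Y : Ω → ℝ := fun ω => Real.log |X ω| with hYdef
  have hYm : Measurable Y := by fun_prop
  have hne : ∀ᵐ ω, X ω ≠ 0 := by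
    rw [ae_iff]; simpa using hX0
  have hexpY : ∀ s : ℝ, (fun ω => |X ω| ^ s) =ᵐ[ℙ] (fun ω => Real.exp (s * Y ω)) := by
    intro s
    filter_upwards [hne] with ω hω
    rw [Real.rpow_def_of_pos (abs_pos.2 hω), mul_comm]
  -- the explicit moment
  set t : ℝ := min 1 α / 2 with ht
  have hm0 : 0 < min 1 α := lt_min one_pos hα0
  have ht0 : 0 < t := by positivity
  have hmom : ∀ s, 0 < s → s ≤ t → Integrable (fun ω => Real.exp (s * Y ω)) ∧
      (∫ ω, Real.exp (s * Y ω)) * Real.cos (Real.pi / 2 * s) =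
      Real.exp ((τ + C * (1 - β)) * s + Real.log (Real.Gamma (1 - β * s))
        - Real.log (Real.Gamma (1 - 1 * s))) * Real.cos (Real.pi / 2 * θ * s) := by
    intro s hs0 hst
    have hs1 : s < 1 := by have := min_le_left 1 α; linarith
    have hsα : s < α := by have := min_le_right 1 α; linarith
    obtain ⟨hI, hE⟩ := ss_moment hXm hz hφ hs0 hs1 hsα
    refine ⟨hI.congr (hexpY s), ?_⟩
    rw [integral_congr_ae (hexpY s)] at hE
    have hsβ : s / α = β * s := by rw [hαβ]; field_simp
    have hβs : β * s < 1 := by rw [← hsβ]; exact (div_lt_one hα0).2 hsα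
    have hre : (Complex.exp ((s / α : ℝ) * z)).re =
        Real.exp ((τ + C * (1 - β)) * s) * Real.cos (Real.pi / 2 * θ * s) := by
      rw [Complex.exp_re, Complex.re_ofReal_mul, Complex.im_ofReal_mul, hzim,
        show z.re = α * τ + C * (α - 1) by rw [hz']; simp, hsβ]
      rw [show β * s * (α * τ + C * (α - 1)) = (τ + C * (1 - β)) * s by
          linear_combination (s * τ + C * s) * hα1,
        show β * s * -(α * (Real.pi / 2 * θ)) = -(Real.pi / 2 * θ * s) by
          linear_combination (-(s * (Real.pi / 2 * θ))) * hα1, Real.cos_neg]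
    rw [hre, hsβ] at hE
    have hG1 : 0 < Real.Gamma (1 - s) := Real.Gamma_pos_of_pos (by linarith)
    have hG2 : 0 < Real.Gamma (1 - β * s) := Real.Gamma_pos_of_pos (by linarith)
    rw [one_mul, Real.exp_sub, Real.exp_add, Real.exp_log hG1, Real.exp_log hG2]
    generalize Real.cos (Real.pi / 2 * s) = c1 at hE ⊢
    generalize Real.cos (Real.pi / 2 * θ * s) = c2 at hE ⊢
    rw [div_mul_eq_mul_div, eq_div_iff hG1.ne']
    linear_combination hE
  have hM := ss_mgf hYm (fun p => hlog p) ht0 (fun s h1 h2 => (hmom s h1 h2).1)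
  have hL : (fun s : ℝ => ((τ + C * (1 - β)) * s + Real.log (Real.Gamma (1 - β * s))
        - Real.log (Real.Gamma (1 - 1 * s))) - (τ * s + (Real.pi ^ 2 / 12 * (β ^ 2 - 1)) * s ^ 2
        + (zetaR 3 / 3 * (β ^ 3 - 1)) * s ^ 3 + (Real.pi ^ 4 / 360 * (β ^ 4 - 1)) * s ^ 4))
      =O[𝓝[>] 0] (fun s : ℝ => s ^ 5) := by
    refine ((ss_logGamma_O β).sub (ss_logGamma_O 1)).congr_left fun s => ?_
    ring
  have hE := ss_exp_O hL
  have h1 := ss_mul_O (by fun_prop) (by fun_prop) hM (ss_cos_O (Real.pi / 2))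
  have h2 := ss_mul_O (by fun_prop) (by fun_prop) hE (ss_cos_O (Real.pi / 2 * θ))
  have h3 := h2.sub h1
  set m1 := ∫ ω, Y ω with hm1
  set m2 := ∫ ω, Y ω ^ 2 with hm2
  set m3 := ∫ ω, Y ω ^ 3 with hm3
  set m4 := ∫ ω, Y ω ^ 4 with hm4
  set q2 := τ ^ 2 / 2 + Real.pi ^ 2 / 12 * (β ^ 2 - 1) with hq2
  set q3 := τ ^ 3 / 6 + τ * (Real.pi ^ 2 / 12 * (β ^ 2 - 1)) + zetaR 3 / 3 * (β ^ 3 - 1) with hq3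
  set q4 := τ ^ 4 / 24 + τ ^ 2 * (Real.pi ^ 2 / 12 * (β ^ 2 - 1)) / 2
    + (Real.pi ^ 2 / 12 * (β ^ 2 - 1)) ^ 2 / 2 + τ * (zetaR 3 / 3 * (β ^ 3 - 1))
    + Real.pi ^ 4 / 360 * (β ^ 4 - 1) with hq4
  generalize ha : Real.pi / 2 = a at h3
  generalize hb : a * θ = b at h3
  have h4 : (fun s : ℝ => 0 + s * ((m1 - τ) + s * ((m2 / 2 - a ^ 2 / 2 - (q2 - b ^ 2 / 2)) +
      s * ((m3 / 6 - m1 * a ^ 2 / 2 - (q3 - τ * b ^ 2 / 2)) +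
      s * ((m4 / 24 - m2 / 2 * a ^ 2 / 2 + a ^ 4 / 24 - (q4 - q2 * b ^ 2 / 2 + b ^ 4 / 24)) +
      s * ((m1 * a ^ 4 / 24 - m3 / 6 * a ^ 2 / 2 - (τ * b ^ 4 / 24 - q3 * b ^ 2 / 2))
        + s * (m2 / 2 * a ^ 4 / 24 - m4 / 24 * a ^ 2 / 2 - (q2 * b ^ 4 / 24 - q4 * b ^ 2 / 2))
        + s ^ 2 * (m3 / 6 * a ^ 4 / 24 - q3 * b ^ 4 / 24)
        + s ^ 3 * (m4 / 24 * a ^ 4 / 24 - q4 * b ^ 4 / 24)))))))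
      =O[𝓝[>] 0] (fun s : ℝ => s ^ 5) := by
    refine h3.congr' ?_ EventuallyEq.rfl
    filter_upwards [Ioc_mem_nhdsGT ht0] with s hs
    have := (hmom s hs.1 hs.2).2
    rw [ha, hb] at this
    rw [this]
    ring
  obtain ⟨e1, e2, e3, e4⟩ := ss_coeff (by fun_prop) h4
  clear h1 h2 h3 h4 hM hL hE
  rw [hν32, hDV, ← hβ2]
  have hm2v : m2 = 2 * (a ^ 2 / 2 + q2 - b ^ 2 / 2) := by linarith
  have hm4v : m4 = 24 * (m2 / 2 * a ^ 2 / 2 - a ^ 4 / 24 + (q4 - q2 * b ^ 2 / 2 + b ^ 4 / 24)) := by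
    linarith
  rw [hm4v, hm2v, hq4, hq2, ← hb, ← ha]
  ring
end

section
/- Let X be a strictly stable random variable with parameters (ν, θ, τ). Then E[(log|X|)⁶] = τ⁶ + 15τ⁴·DV + 40τ³·ζ(3)(ν^{3/2} − 1) + 45τ²·DV² + 15·DV³ + 15τ²·π⁴((1 − θ⁴)/8 + (ν² − 1)/15) + 120τ·ζ(3)(ν^{3/2} − 1)·DV + 40ζ(3)²(ν^{3/2} − 1)² + 144τ·ζ(5)(ν^{5/2} − 1) + 15π⁴((1 − θ⁴)/8 + (ν² − 1)/15)·DV + 8π⁶((1 − θ⁶)/32 + (ν³ − 1)/63). -/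
open MeasureTheory ProbabilityTheory

open MeasureTheory ProbabilityTheory

namespace StableAux
open Set Filter Topology

lemma intOn (a b : ℝ) (ha : 0 < a) (hb : 0 < b) :
    IntegrableOn (fun t : ℝ => t ^ (a - 1) * Real.exp (-(b * t))) (Ioi 0) := by
  have := integrableOn_rpow_mul_exp_neg_mul_rpow (p := 1) (s := a - 1) (b := b)
    (by linarith) one_pos hb
  simpa using this

lemma norm_kernel (a : ℝ) (r : ℂ) (t : ℝ) (ht : 0 < t) :
    ‖((t ^ (a - 1) : ℝ) : ℂ) * Complex.exp (-(r * t))‖ = t ^ (a - 1) * Real.exp (-(r.re * t)) := by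
  rw [norm_mul, Complex.norm_real, Complex.norm_exp, Real.norm_of_nonneg (by positivity)]
  simp

lemma meas_kernel (a : ℝ) (r : ℂ) :
    Measurable (fun t : ℝ => ((t ^ (a - 1) : ℝ) : ℂ) * Complex.exp (-(r * t))) := by
  fun_prop

lemma int_kernel (a : ℝ) (r : ℂ) (ha : 0 < a) (hr : 0 < r.re) :
    IntegrableOn (fun t : ℝ => ((t ^ (a - 1) : ℝ) : ℂ) * Complex.exp (-(r * t))) (Ioi 0) := by
  refine Integrable.mono' (intOn a r.re ha hr) (meas_kernel a r).aestronglyMeasurable ?_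
  refine (ae_restrict_iff' measurableSet_Ioi).2 (Eventually.of_forall fun t ht => ?_)
  exact (norm_kernel a r t ht).le

lemma hasDerivAt_kernelInt (a : ℝ) (r : ℂ) (ha : 0 < a) (hr : 0 < r.re) :
    DifferentiableAt ℂ (fun r : ℂ => ∫ t in Ioi (0:ℝ), ((t ^ (a - 1) : ℝ) : ℂ) * Complex.exp (-(r * t))) r := by
  have key := hasDerivAt_integral_of_dominated_loc_of_deriv_le
    (μ := volume.restrict (Ioi (0:ℝ))) (𝕜 := ℂ)
    (F := fun (r : ℂ) (t : ℝ) => ((t ^ (a - 1) : ℝ) : ℂ) * Complex.exp (-(r * t)))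
    (F' := fun (r : ℂ) (t : ℝ) => ((t ^ (a - 1) : ℝ) : ℂ) * (Complex.exp (-(r * t)) * (-(t : ℂ))))
    (x₀ := r) (s := Metric.ball r (r.re / 2)) (bound := fun t => t ^ (a + 1 - 1) * Real.exp (-((r.re / 2) * t)))
    (Metric.ball_mem_nhds _ (by linarith))
    (Eventually.of_forall fun z => (meas_kernel a z).aestronglyMeasurable)
    (int_kernel a r ha hr)
    (Measurable.aestronglyMeasurable (by fun_prop))
    ?_ (intOn (a + 1) (r.re / 2) (by linarith) (by linarith)) ?_
  · exact key.2.differentiableAt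
  · refine (ae_restrict_iff' measurableSet_Ioi).2 (Eventually.of_forall fun t ht z hz => ?_)
    have ht' : (0:ℝ) < t := ht
    rw [← mul_assoc, norm_mul, norm_kernel a z t ht, norm_neg, Complex.norm_real,
      Real.norm_of_nonneg ht'.le]
    have h1 : t ^ (a + 1 - 1) = t ^ (a - 1) * t := by
      rw [show a + 1 - 1 = (a - 1) + 1 by ring, Real.rpow_add_one ht'.ne']
    rw [h1]
    have h2 : r.re / 2 ≤ z.re := by
      have := Complex.abs_re_le_norm (z - r)
      rw [Metric.mem_ball, dist_eq_norm] at hz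
      rw [Complex.sub_re] at this
      have := abs_le.1 (this.trans hz.le)
      linarith [this.1]
    have h3 : Real.exp (-(z.re * t)) ≤ Real.exp (-(r.re / 2 * t)) := by
      apply Real.exp_le_exp.2; nlinarith
    have : 0 ≤ t ^ (a-1) * t := by positivity
    nlinarith
  · refine Eventually.of_forall fun t z hz => ?_
    refine HasDerivAt.const_mul _ ?_
    refine HasDerivAt.cexp ?_
    have := ((hasDerivAt_id z).mul_const (t:ℂ)).fun_neg
    simpa using this

lemma gamma_int (a : ℝ) (r : ℂ) (ha : 0 < a) (hr : 0 < r.re) :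
    ∫ t in Ioi (0:ℝ), ((t ^ (a - 1) : ℝ) : ℂ) * Complex.exp (-(r * t)) =
      r ^ (-(a:ℂ)) * (Real.Gamma a : ℂ) := by
  have hopen : IsOpen {z : ℂ | 0 < z.re} := isOpen_lt continuous_const Complex.continuous_re
  have hf : AnalyticOnNhd ℂ (fun r : ℂ => ∫ t in Ioi (0:ℝ), ((t ^ (a - 1) : ℝ) : ℂ) * Complex.exp (-(r * t))) {z : ℂ | 0 < z.re} :=
    DifferentiableOn.analyticOnNhd (fun z hz => (hasDerivAt_kernelInt a z ha hz).differentiableWithinAt) hopen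
  have hg : AnalyticOnNhd ℂ (fun r : ℂ => r ^ (-(a:ℂ)) * (Real.Gamma a : ℂ)) {z : ℂ | 0 < z.re} := by
    refine DifferentiableOn.analyticOnNhd (fun z hz => DifferentiableAt.differentiableWithinAt ?_) hopen
    refine DifferentiableAt.mul_const ?_ _
    exact DifferentiableAt.cpow_const differentiableAt_id (Or.inl hz)
  have hpre : IsPreconnected {z : ℂ | 0 < z.re} := (convex_halfSpace_re_gt 0).isPreconnected
  refine hf.eqOn_of_preconnected_of_frequently_eq hg hpre (z₀ := 1) (by simp) ?_ hr
  have hreal : ∀ x : ℝ, 0 < x → (∫ t in Ioi (0:ℝ), ((t ^ (a - 1) : ℝ) : ℂ) * Complex.exp (-((x:ℂ) * t))) = (x:ℂ) ^ (-(a:ℂ)) * (Real.Gamma a : ℂ) := by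
    intro x hx
    have := Real.integral_rpow_mul_exp_neg_mul_Ioi ha hx
    have h2 : (∫ t in Ioi (0:ℝ), ((t ^ (a - 1) : ℝ) : ℂ) * Complex.exp (-((x:ℂ) * t))) =
        ((∫ t in Ioi (0:ℝ), t ^ (a - 1) * Real.exp (-(x * t)) : ℝ) : ℂ) := by
      rw [← integral_complex_ofReal]
      congr 1 with t
      push_cast; rfl
    rw [h2, this, one_div, Real.inv_rpow hx.le, ← Real.rpow_neg hx.le, Complex.ofReal_mul, Complex.ofReal_cpow hx.le]
    simp
  have : Tendsto (fun n : ℕ => ((1 + 1 / ((n:ℝ) + 1) : ℝ) : ℂ)) atTop (𝓝[≠] 1) := by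
    rw [tendsto_nhdsWithin_iff]
    constructor
    · have h : Tendsto (fun n : ℕ => ((1 + 1 / ((n:ℝ) + 1) : ℝ))) atTop (𝓝 (1 + 0)) :=
        tendsto_const_nhds.add tendsto_one_div_add_atTop_nhds_zero_nat
      have := (Complex.continuous_ofReal.tendsto _).comp h
      rw [add_zero, Complex.ofReal_one] at this
      exact this
    · refine Eventually.of_forall fun n => ?_
      simp only [mem_compl_iff, mem_singleton_iff]
      have : (0:ℝ) < 1 / ((n:ℝ) + 1) := by positivity
      intro h
      have h := Complex.ofReal_eq_one.1 h
      linarith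
  refine this.frequently (Frequently.of_forall fun n => ?_)
  exact hreal _ (by positivity)

end StableAux
open MeasureTheory ProbabilityTheory

namespace StableAux
open Set Filter Topology

lemma mellin_eps {Ω : Type*} [MeasurableSpace Ω] (μ : Measure Ω) [IsProbabilityMeasure μ]
    (X : Ω → ℝ) (hX : Measurable X) (s ε : ℝ) (hs : 0 < s) (hε : 0 < ε) :
    ∫ t in Ioi (0:ℝ), ((t ^ (s - 1) : ℝ) : ℂ) * (Complex.exp (-(ε * t)) *
        ∫ ω, Complex.exp (Complex.I * t * X ω) ∂μ) =
      (Real.Gamma s : ℂ) * ∫ ω, ((ε : ℂ) - Complex.I * X ω) ^ (((-s : ℝ)) : ℂ) ∂μ := by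
  have h1 : ∀ t : ℝ, ((t ^ (s - 1) : ℝ) : ℂ) * (Complex.exp (-(ε * t)) *
        ∫ ω, Complex.exp (Complex.I * t * X ω) ∂μ) =
      ∫ ω, ((t ^ (s - 1) : ℝ) : ℂ) * Complex.exp (-(((ε : ℂ) - Complex.I * X ω) * t)) ∂μ := by
    intro t
    rw [← integral_const_mul, ← integral_const_mul]
    congr 1 with ω
    rw [← Complex.exp_add]
    congr 2; ring
  simp_rw [h1]
  rw [integral_integral_swap]
  · rw [← integral_const_mul]
    congr 1 with ω
    rw [gamma_int s _ hs (by simpa using hε), mul_comm]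
    push_cast; rfl
  · have hb : Integrable (fun z : ℝ × Ω => (z.1 ^ (s-1) * Real.exp (-(ε * z.1))) * (1:ℝ))
        ((volume.restrict (Ioi (0:ℝ))).prod μ) :=
      Integrable.mul_prod (f := fun t : ℝ => t ^ (s-1) * Real.exp (-(ε * t))) (g := fun _ : Ω => (1:ℝ))
        (intOn s ε hs hε) (integrable_const _)
    refine Integrable.mono' hb (Measurable.aestronglyMeasurable ?_) ?_
    · unfold Function.uncurry; fun_prop
    · have : ∀ᵐ t ∂(volume.restrict (Ioi (0:ℝ))), 0 < t :=
        ae_restrict_mem measurableSet_Ioi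
      have h2 := (Measure.quasiMeasurePreserving_fst (μ := volume.restrict (Ioi (0:ℝ))) (ν := μ)).ae this
      filter_upwards [h2] with z hz
      rw [Function.uncurry, norm_kernel s _ _ hz]
      simp

lemma norm_eps (s ε x : ℝ) :
    ‖((ε : ℂ) - Complex.I * x) ^ (((-s : ℝ)) : ℂ)‖ = ‖(ε : ℂ) - Complex.I * x‖ ^ (-s) :=
  Complex.norm_cpow_real _ _

lemma re_eps (s ε x : ℝ) (hs : 0 < s) (hs1 : s < 1) (hε : 0 ≤ ε) :
    Real.cos (Real.pi * s / 2) * ‖((ε : ℂ) - Complex.I * x) ^ (((-s : ℝ)) : ℂ)‖ ≤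
     (((ε : ℂ) - Complex.I * x) ^ (((-s : ℝ)) : ℂ)).re := by
  rw [Complex.norm_cpow_real, Complex.cpow_ofReal_re, mul_comm]
  have h : |((ε : ℂ) - Complex.I * x).arg| ≤ Real.pi / 2 :=
    Complex.abs_arg_le_pi_div_two_iff.2 (by simpa using hε)
  refine mul_le_mul_of_nonneg_left ?_ (by positivity)
  rw [mul_neg, Real.cos_neg, ← Real.cos_abs (Complex.arg _ * s), abs_mul, abs_of_pos hs]
  apply Real.cos_le_cos_of_nonneg_of_le_pi
  · positivity
  · nlinarith [Real.pi_pos]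
  · nlinarith

lemma re_zero (s x : ℝ) (hs : 0 < s) (hx : x ≠ 0) :
    ((-Complex.I * x) ^ (((-s : ℝ)) : ℂ)).re = Real.cos (Real.pi * s / 2) * |x| ^ (-s) := by
  rw [Complex.cpow_ofReal_re, mul_comm]
  have h : |(-Complex.I * x).arg| = Real.pi / 2 := by
    apply le_antisymm
    · exact Complex.abs_arg_le_pi_div_two_iff.2 (by simp)
    · rw [← not_lt, Complex.abs_arg_lt_pi_div_two_iff]
      simp [hx]
  rw [mul_neg, Real.cos_neg, ← Real.cos_abs (Complex.arg _ * s), abs_mul, abs_of_pos hs, h]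
  congr 2
  · ring
  · simp

lemma kernel_change (s α : ℝ) (A : ℂ) (hs : 0 < s) (hα : 0 < α) (hA : 0 < A.re) :
    ∫ t in Ioi (0:ℝ), ((t ^ (s - 1) : ℝ) : ℂ) * Complex.exp (-(A * ((t ^ α : ℝ) : ℂ))) =
      (1 / α : ℝ) * ((Real.Gamma (s / α) : ℂ) * A ^ (((-(s / α) : ℝ)) : ℂ)) := by
  have h := integral_comp_rpow_Ioi_of_pos
    (g := fun t : ℝ => ((t ^ (s / α - 1) : ℝ) : ℂ) * Complex.exp (-(A * (t : ℂ)))) hα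
  rw [gamma_int _ _ (by positivity) hA] at h
  have h2 : ∀ t ∈ Ioi (0:ℝ), ((t ^ (s - 1) : ℝ) : ℂ) * Complex.exp (-(A * ((t ^ α : ℝ) : ℂ))) =
     ((1 / α : ℝ) : ℂ) * ((α * t ^ (α - 1)) • ((((t ^ α) ^ (s / α - 1) : ℝ) : ℂ) * Complex.exp (-(A * ((t ^ α : ℝ) : ℂ))))) := by
    intro t ht
    have ht : (0:ℝ) < t := ht
    have : t ^ (s - 1) = (1 / α) * ((α * t ^ (α - 1)) * (t ^ α) ^ (s / α - 1)) := by
      rw [← Real.rpow_mul ht.le]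
      have : t ^ (α - 1) * t ^ (α * (s / α - 1)) = t ^ (s - 1) := by
        rw [← Real.rpow_add ht]; congr 1; field_simp; ring
      rw [mul_assoc, this]; field_simp
    rw [this, Complex.real_smul]
    push_cast
    ring
  rw [setIntegral_congr_fun measurableSet_Ioi h2, integral_const_mul, h]
  push_cast
  ring

lemma mellin {Ω : Type*} [MeasurableSpace Ω] (μ : Measure Ω) [IsProbabilityMeasure μ]
    (X : Ω → ℝ) (hX : Measurable X) (hX0 : ∀ᵐ ω ∂μ, X ω ≠ 0) (s α : ℝ) (A : ℂ)
    (hs : 0 < s) (hs1 : s < 1) (hα : 0 < α) (hA : 0 < A.re)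
    (hφ : ∀ t : ℝ, 0 < t → ∫ ω, Complex.exp (Complex.I * t * X ω) ∂μ =
      Complex.exp (-(A * ((t ^ α : ℝ) : ℂ)))) :
    Integrable (fun ω => |X ω| ^ (-s)) μ ∧
    Real.Gamma s * (Real.cos (Real.pi * s / 2) * ∫ ω, |X ω| ^ (-s) ∂μ) =
      (1 / α) * (Real.Gamma (s / α) * (A ^ (((-(s / α) : ℝ)) : ℂ)).re) := by
  have hΓ : 0 < Real.Gamma s := Real.Gamma_pos_of_pos hs
  have hcos : 0 < Real.cos (Real.pi * s / 2) := by
    apply Real.cos_pos_of_mem_Ioo; constructor <;> nlinarith [Real.pi_pos]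
  set ε : ℕ → ℝ := fun n => 1 / ((n:ℝ) + 1) with hε
  have hεpos : ∀ n, 0 < ε n := fun n => by simp only [hε]; positivity
  have hεlim : Tendsto ε atTop (𝓝 0) := tendsto_one_div_add_atTop_nhds_zero_nat
  set g : ℕ → Ω → ℂ := fun n ω => ((ε n : ℂ) - Complex.I * X ω) ^ (((-s : ℝ)) : ℂ) with hg
  set g0 : Ω → ℂ := fun ω => (-Complex.I * X ω) ^ (((-s : ℝ)) : ℂ) with hg0
  set b : ℝ → ℝ := fun t => t ^ (s - 1) * Real.exp (-A.re * t ^ α) with hb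
  have hbint : IntegrableOn b (Ioi 0) :=
    integrableOn_rpow_mul_exp_neg_mul_rpow (by linarith) hα hA
  set F : ℕ → ℝ → ℂ := fun n t => ((t ^ (s - 1) : ℝ) : ℂ) * (Complex.exp (-(ε n * t)) *
        Complex.exp (-(A * ((t ^ α : ℝ) : ℂ)))) with hF
  have hFb : ∀ n, ∀ᵐ t ∂(volume.restrict (Ioi (0:ℝ))), ‖F n t‖ ≤ b t := by
    intro n
    filter_upwards [ae_restrict_mem measurableSet_Ioi] with t ht
    have ht : (0:ℝ) < t := ht
    simp only [hF, hb]
    rw [norm_mul, norm_mul, Complex.norm_real, Complex.norm_exp, Complex.norm_exp, Real.norm_of_nonneg (by positivity)]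
    refine mul_le_mul_of_nonneg_left ?_ (by positivity)
    have h1 : Real.exp (-(ε n * t : ℂ)).re ≤ 1 := by
      rw [Real.exp_le_one_iff]
      have := mul_pos (hεpos n) ht
      simp; exact this.le
    have h2 : (-(A * ((t ^ α : ℝ) : ℂ))).re = -A.re * t ^ α := by
      rw [Complex.neg_re, Complex.re_mul_ofReal]; ring
    rw [h2]
    nlinarith [Real.exp_pos (-A.re * t ^ α)]
  have hFm : ∀ n, AEStronglyMeasurable (F n) (volume.restrict (Ioi (0:ℝ))) := by
    intro n; refine Measurable.aestronglyMeasurable ?_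
    simp only [hF]; fun_prop
  have hE : ∀ n, ∫ t in Ioi (0:ℝ), F n t = (Real.Gamma s : ℂ) * ∫ ω, g n ω ∂μ := by
    intro n
    rw [← mellin_eps μ X hX s (ε n) hs (hεpos n)]
    refine setIntegral_congr_fun measurableSet_Ioi fun t ht => ?_
    simp only [hF]
    rw [hφ t ht]
  have hlim1 : Tendsto (fun n => ∫ t in Ioi (0:ℝ), F n t) atTop
      (𝓝 ((1 / α : ℝ) * ((Real.Gamma (s / α) : ℂ) * A ^ (((-(s / α) : ℝ)) : ℂ)))) := by
    rw [← kernel_change s α A hs hα hA]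
    refine tendsto_integral_of_dominated_convergence b hFm hbint hFb ?_
    refine Eventually.of_forall fun t => ?_
    have h1 : Tendsto (fun n => Complex.exp (-(ε n * t))) atTop (𝓝 (Complex.exp (-((0:ℝ) * t)))) := by
      have hc : Continuous (fun e : ℝ => Complex.exp (-((e:ℂ) * t))) := by fun_prop
      exact (hc.tendsto 0).comp hεlim
    have h2 := (h1.mul_const (Complex.exp (-(A * ((t ^ α : ℝ) : ℂ))))).const_mul ((t ^ (s - 1) : ℝ) : ℂ)
    simpa using h2
  have hgm : ∀ n, Measurable (g n) := by
    intro n; simp only [hg]; fun_prop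
  have hg0m : Measurable g0 := by simp only [hg0]; fun_prop
  have hnorm : ∀ (n : ℕ) ω, X ω ≠ 0 → ‖g n ω‖ ≤ ‖g0 ω‖ := by
    intro n ω hω
    simp only [hg, hg0]
    rw [Complex.norm_cpow_real, Complex.norm_cpow_real]
    have h1 : ‖(-Complex.I * X ω)‖ = |X ω| := by simp
    have h2 : |X ω| ≤ ‖(ε n : ℂ) - Complex.I * X ω‖ := by
      have := Complex.abs_im_le_norm ((ε n : ℂ) - Complex.I * X ω)
      simpa using this
    rw [h1]
    exact Real.rpow_le_rpow_of_nonpos (abs_pos.2 hω) h2 (by linarith)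
  have hgbd : ∀ n, Integrable (g n) μ := by
    intro n
    refine Integrable.of_bound (hgm n).aestronglyMeasurable (ε n ^ (-s)) (Eventually.of_forall fun ω => ?_)
    simp only [hg]
    rw [Complex.norm_cpow_real]
    have h2 : ε n ≤ ‖(ε n : ℂ) - Complex.I * X ω‖ := by
      have := Complex.re_le_norm ((ε n : ℂ) - Complex.I * X ω)
      simpa using this
    exact Real.rpow_le_rpow_of_nonpos (hεpos n) h2 (by linarith)
  have hgl : ∀ ω, X ω ≠ 0 → Tendsto (fun n => g n ω) atTop (𝓝 (g0 ω)) := by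
    intro ω hω
    simp only [hg, hg0]
    have hc : ContinuousAt (fun e : ℝ => ((e : ℂ) - Complex.I * X ω) ^ (((-s : ℝ)) : ℂ)) 0 := by
      refine ContinuousAt.cpow (by fun_prop) continuousAt_const ?_
      rw [Complex.mem_slitPlane_iff]
      right; simp [hω]
    have := hc.tendsto.comp hεlim
    simpa [Function.comp_def] using this
  set M : ℝ := (∫ t in Ioi (0:ℝ), b t) / Real.Gamma s / Real.cos (Real.pi * s / 2) with hM
  have hMb : ∀ n, ∫⁻ ω, ‖g n ω‖ₑ ∂μ ≤ ENNReal.ofReal M := by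
    intro n
    rw [← ofReal_integral_norm_eq_lintegral_enorm (hgbd n)]
    apply ENNReal.ofReal_le_ofReal
    rw [hM, le_div_iff₀ hcos, le_div_iff₀ hΓ]
    have h1 : Real.cos (Real.pi * s / 2) * ∫ ω, ‖g n ω‖ ∂μ ≤ (∫ ω, g n ω ∂μ).re := by
      rw [← integral_const_mul]
      have : (∫ ω, g n ω ∂μ).re = ∫ ω, (g n ω).re ∂μ := by
        exact (integral_re (hgbd n)).symm
      rw [this]
      exact integral_mono ((hgbd n).norm.const_mul _) (hgbd n).re
        (fun ω => re_eps s (ε n) (X ω) hs hs1 (hεpos n).le)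
    have h2 : ‖∫ t in Ioi (0:ℝ), F n t‖ ≤ ∫ t in Ioi (0:ℝ), b t :=
      norm_integral_le_of_norm_le hbint (hFb n)
    rw [hE n] at h2
    have h3 := (Complex.re_le_norm _).trans h2
    rw [Complex.re_ofReal_mul] at h3
    nlinarith
  have hg0int : Integrable g0 μ := by
    refine ⟨hg0m.aestronglyMeasurable, ?_⟩
    have h1 : ∫⁻ ω, ‖g0 ω‖ₑ ∂μ ≤ liminf (fun n => ∫⁻ ω, ‖g n ω‖ₑ ∂μ) atTop := by
      have : ∫⁻ ω, ‖g0 ω‖ₑ ∂μ = ∫⁻ ω, liminf (fun n => ‖g n ω‖ₑ) atTop ∂μ := by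
        refine lintegral_congr_ae ?_
        filter_upwards [hX0] with ω hω
        exact ((hgl ω hω).enorm.liminf_eq).symm
      rw [this]
      exact lintegral_liminf_le fun n => (hgm n).enorm
    have h2 : liminf (fun n => ∫⁻ ω, ‖g n ω‖ₑ ∂μ) atTop ≤ ENNReal.ofReal M := by
      refine (liminf_le_liminf (Eventually.of_forall hMb)).trans ?_
      simp
    exact (h1.trans h2).trans_lt ENNReal.ofReal_lt_top
  have hlim2 : Tendsto (fun n => ∫ ω, g n ω ∂μ) atTop (𝓝 (∫ ω, g0 ω ∂μ)) := by
    refine tendsto_integral_of_dominated_convergence (fun ω => ‖g0 ω‖)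
      (fun n => (hgm n).aestronglyMeasurable) hg0int.norm ?_ ?_
    · intro n; filter_upwards [hX0] with ω hω using hnorm n ω hω
    · filter_upwards [hX0] with ω hω using hgl ω hω
  have hnorm0 : ∀ ω, ‖g0 ω‖ = |X ω| ^ (-s) := by
    intro ω
    simp only [hg0]
    rw [Complex.norm_cpow_real]; simp
  refine ⟨by simpa only [hnorm0] using hg0int.norm, ?_⟩
  have heq := tendsto_nhds_unique hlim1 (by simp_rw [hE]; exact hlim2.const_mul _)
  have hre := congrArg Complex.re heq
  rw [Complex.re_ofReal_mul, Complex.re_ofReal_mul, Complex.re_ofReal_mul] at hre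
  rw [hre]
  congr 1
  have : (∫ ω, g0 ω ∂μ).re = ∫ ω, (g0 ω).re ∂μ := (integral_re hg0int).symm
  rw [this, ← integral_const_mul]
  refine integral_congr_ae ?_
  filter_upwards [hX0] with ω hω
  exact (re_zero s (X ω) hs hω).symm

end StableAux
open MeasureTheory ProbabilityTheory

namespace StableAux
open Set Filter Topology Asymptotics

/-- `f` has the given Taylor coefficients up to order six at `0` from the right. -/
def J (f : ℝ → ℝ) (a0 a1 a2 a3 a4 a5 a6 : ℝ) : Prop :=
  (fun s : ℝ => f s - (a0 + a1 * s + a2 * s ^ 2 + a3 * s ^ 3 + a4 * s ^ 4 + a5 * s ^ 5 + a6 * s ^ 6))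
    =O[𝓝[>] 0] fun s : ℝ => s ^ 7

lemma bdd_of_cont {f : ℝ → ℝ} (hf : Continuous f) :
    f =O[𝓝[>] 0] fun _ : ℝ => (1:ℝ) :=
  (hf.continuousAt.tendsto.mono_left nhdsWithin_le_nhds).isBigO_one ℝ

lemma pow7_bdd : (fun s : ℝ => s ^ 7) =O[𝓝[>] 0] fun _ : ℝ => (1:ℝ) :=
  bdd_of_cont (by fun_prop)

lemma J.of_eq {f : ℝ → ℝ} {a0 a1 a2 a3 a4 a5 a6 b0 b1 b2 b3 b4 b5 b6 : ℝ}
    (h : J f a0 a1 a2 a3 a4 a5 a6) (h0 : a0 = b0) (h1 : a1 = b1) (h2 : a2 = b2) (h3 : a3 = b3)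
    (h4 : a4 = b4) (h5 : a5 = b5) (h6 : a6 = b6) : J f b0 b1 b2 b3 b4 b5 b6 := by
  subst h0 h1 h2 h3 h4 h5 h6; exact h

lemma J.of_sub {f g : ℝ → ℝ} {a0 a1 a2 a3 a4 a5 a6 : ℝ} (h : J f a0 a1 a2 a3 a4 a5 a6)
    (hfg : (fun s => g s - f s) =O[𝓝[>] 0] fun s : ℝ => s ^ 7) : J g a0 a1 a2 a3 a4 a5 a6 := by
  unfold J at *
  refine (hfg.add h).congr_left fun s => ?_
  ring

lemma J.congr {f g : ℝ → ℝ} {a0 a1 a2 a3 a4 a5 a6 : ℝ} (h : J f a0 a1 a2 a3 a4 a5 a6)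
    (hfg : g =ᶠ[𝓝[>] 0] f) : J g a0 a1 a2 a3 a4 a5 a6 := by
  refine h.of_sub ?_
  have : (fun s => g s - f s) =ᶠ[𝓝[>] 0] fun _ => (0:ℝ) := by
    filter_upwards [hfg] with s hs
    rw [hs, sub_self]
  exact this.trans_isBigO (isBigO_zero _ _)

lemma J.add {f g : ℝ → ℝ} {a0 a1 a2 a3 a4 a5 a6 b0 b1 b2 b3 b4 b5 b6 : ℝ}
    (hf : J f a0 a1 a2 a3 a4 a5 a6) (hg : J g b0 b1 b2 b3 b4 b5 b6) :
    J (fun s => f s + g s) (a0 + b0) (a1 + b1) (a2 + b2) (a3 + b3) (a4 + b4) (a5 + b5) (a6 + b6) := by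
  unfold J at *
  refine (IsBigO.add hf hg).congr_left fun s => ?_
  ring

lemma J.const_mul {f : ℝ → ℝ} {a0 a1 a2 a3 a4 a5 a6 : ℝ} (c : ℝ)
    (hf : J f a0 a1 a2 a3 a4 a5 a6) :
    J (fun s => c * f s) (c * a0) (c * a1) (c * a2) (c * a3) (c * a4) (c * a5) (c * a6) := by
  unfold J at *
  refine (IsBigO.const_mul_left hf c).congr_left fun s => ?_
  ring

lemma J.poly (a0 a1 a2 a3 a4 a5 a6 : ℝ) :
    J (fun s => a0 + a1 * s + a2 * s ^ 2 + a3 * s ^ 3 + a4 * s ^ 4 + a5 * s ^ 5 + a6 * s ^ 6)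
      a0 a1 a2 a3 a4 a5 a6 := by
  unfold J
  simp only [sub_self]
  exact isBigO_zero _ _

lemma J.bdd {f : ℝ → ℝ} {a0 a1 a2 a3 a4 a5 a6 : ℝ} (hf : J f a0 a1 a2 a3 a4 a5 a6) :
    f =O[𝓝[>] 0] fun _ : ℝ => (1:ℝ) := by
  have h1 := hf.trans pow7_bdd
  have h2 : (fun s : ℝ => a0 + a1 * s + a2 * s ^ 2 + a3 * s ^ 3 + a4 * s ^ 4 + a5 * s ^ 5 + a6 * s ^ 6)
     =O[𝓝[>] 0] fun _ : ℝ => (1:ℝ) := bdd_of_cont (by fun_prop)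
  refine (h1.add h2).congr_left fun s => ?_
  ring

lemma J.mul {f g : ℝ → ℝ} {a0 a1 a2 a3 a4 a5 a6 b0 b1 b2 b3 b4 b5 b6 : ℝ}
    (hf : J f a0 a1 a2 a3 a4 a5 a6) (hg : J g b0 b1 b2 b3 b4 b5 b6) :
    J (fun s => f s * g s) (a0 * b0) (a0 * b1 + a1 * b0) (a0 * b2 + a1 * b1 + a2 * b0)
      (a0 * b3 + a1 * b2 + a2 * b1 + a3 * b0) (a0 * b4 + a1 * b3 + a2 * b2 + a3 * b1 + a4 * b0)
      (a0 * b5 + a1 * b4 + a2 * b3 + a3 * b2 + a4 * b1 + a5 * b0)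
      (a0 * b6 + a1 * b5 + a2 * b4 + a3 * b3 + a4 * b2 + a5 * b1 + a6 * b0) := by
  have h1 := IsBigO.mul hf hg.bdd
  have h2 := IsBigO.mul (J.poly a0 a1 a2 a3 a4 a5 a6).bdd hg
  have h3 : (fun s : ℝ => s ^ 7 * ((a1 * b6 + a2 * b5 + a3 * b4 + a4 * b3 + a5 * b2 + a6 * b1)
      + (a2 * b6 + a3 * b5 + a4 * b4 + a5 * b3 + a6 * b2) * s
      + (a3 * b6 + a4 * b5 + a5 * b4 + a6 * b3) * s ^ 2
      + (a4 * b6 + a5 * b5 + a6 * b4) * s ^ 3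
      + (a5 * b6 + a6 * b5) * s ^ 4 + (a6 * b6) * s ^ 5)) =O[𝓝[>] 0] fun s : ℝ => s ^ 7 * 1 :=
    (isBigO_refl _ _).mul (bdd_of_cont (by fun_prop))
  simp only [mul_one, one_mul] at h1 h2 h3
  unfold J
  refine ((h1.add h2).add h3).congr_left fun s => ?_
  ring

lemma J.scale {f : ℝ → ℝ} {a0 a1 a2 a3 a4 a5 a6 : ℝ} (hf : J f a0 a1 a2 a3 a4 a5 a6)
    (c : ℝ) (hc : 0 < c) :
    J (fun s => f (c * s)) a0 (a1 * c) (a2 * c ^ 2) (a3 * c ^ 3) (a4 * c ^ 4) (a5 * c ^ 5) (a6 * c ^ 6) := by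
  have ht : Tendsto (fun s : ℝ => c * s) (𝓝[>] 0) (𝓝[>] 0) := by
    rw [tendsto_nhdsWithin_iff]
    constructor
    · have : Continuous (fun s : ℝ => c * s) := by fun_prop
      have h := this.tendsto 0
      rw [mul_zero] at h
      exact h.mono_left nhdsWithin_le_nhds
    · filter_upwards [self_mem_nhdsWithin] with s hs
      exact mul_pos hc hs
  have h1 := IsBigO.comp_tendsto hf ht
  have h2 : ((fun s : ℝ => s ^ 7) ∘ (fun s : ℝ => c * s)) =O[𝓝[>] 0] fun s : ℝ => s ^ 7 := by
    have : (fun s : ℝ => s ^ 7) ∘ (fun s : ℝ => c * s) = fun s => c ^ 7 * s ^ 7 := by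
      ext s; simp; ring
    rw [this]
    exact (isBigO_refl _ _).const_mul_left _
  unfold J
  refine (h1.trans h2).congr_left fun s => ?_
  simp; ring

lemma step {a : ℝ} {f : ℝ → ℝ} {n : ℕ} (hf : Continuous f)
    (h : (fun s : ℝ => a + s * f s) =O[𝓝[>] 0] fun s : ℝ => s ^ (n + 1)) :
    a = 0 ∧ f =O[𝓝[>] 0] fun s : ℝ => s ^ n := by
  have ha : a = 0 := by
    have h1 : Tendsto (fun s : ℝ => a + s * f s) (𝓝[>] 0) (𝓝 a) := by
      have : Continuous (fun s : ℝ => a + s * f s) := by fun_prop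
      have h := this.tendsto 0
      simp only [zero_mul, add_zero] at h
      exact h.mono_left nhdsWithin_le_nhds
    have h2 : Tendsto (fun s : ℝ => s ^ (n + 1)) (𝓝[>] 0) (𝓝 0) := by
      have : Continuous (fun s : ℝ => s ^ (n + 1)) := by fun_prop
      have h := this.tendsto 0
      simp only [zero_pow (Nat.succ_ne_zero n)] at h
      exact h.mono_left nhdsWithin_le_nhds
    exact tendsto_nhds_unique h1 (h.trans_tendsto h2)
  refine ⟨ha, ?_⟩
  subst ha
  have h3 := (isBigO_refl (fun s : ℝ => s⁻¹) (𝓝[>] 0)).mul h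
  refine h3.congr' ?_ ?_
  · filter_upwards [self_mem_nhdsWithin] with s hs
    have : s ≠ 0 := ne_of_gt hs
    field_simp; ring
  · filter_upwards [self_mem_nhdsWithin] with s hs
    have : s ≠ 0 := ne_of_gt hs
    field_simp
    ring

lemma J.unique {f : ℝ → ℝ} {a0 a1 a2 a3 a4 a5 a6 b0 b1 b2 b3 b4 b5 b6 : ℝ}
    (hf : J f a0 a1 a2 a3 a4 a5 a6) (hg : J f b0 b1 b2 b3 b4 b5 b6) :
    a0 = b0 ∧ a1 = b1 ∧ a2 = b2 ∧ a3 = b3 ∧ a4 = b4 ∧ a5 = b5 ∧ a6 = b6 := by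
  have h : (fun s : ℝ => (a0 - b0) + s * ((a1 - b1) + s * ((a2 - b2) + s * ((a3 - b3) + s *
      ((a4 - b4) + s * ((a5 - b5) + s * ((a6 - b6) + s * 0))))))) =O[𝓝[>] 0] fun s : ℝ => s ^ (6 + 1) := by
    refine (IsBigO.sub hg hf).congr_left fun s => ?_
    ring
  obtain ⟨h0, h⟩ := step (by fun_prop) h
  obtain ⟨h1, h⟩ := step (n := 5) (by fun_prop) h
  obtain ⟨h2, h⟩ := step (n := 4) (by fun_prop) h
  obtain ⟨h3, h⟩ := step (n := 3) (by fun_prop) h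
  obtain ⟨h4, h⟩ := step (n := 2) (by fun_prop) h
  obtain ⟨h5, h⟩ := step (n := 1) (by fun_prop) h
  obtain ⟨h6, h⟩ := step (n := 0) (f := fun _ => 0) (by fun_prop) h
  refine ⟨?_, ?_, ?_, ?_, ?_, ?_, ?_⟩ <;> linarith

lemma J.isBigO_id {f : ℝ → ℝ} {a1 a2 a3 a4 a5 a6 : ℝ} (hf : J f 0 a1 a2 a3 a4 a5 a6) :
    f =O[𝓝[>] 0] fun s : ℝ => s := by
  have h1 : (fun s : ℝ => s * (a1 + a2 * s + a3 * s ^ 2 + a4 * s ^ 3 + a5 * s ^ 4 + a6 * s ^ 5))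
      =O[𝓝[>] 0] fun s : ℝ => s * 1 :=
    (isBigO_refl _ _).mul (bdd_of_cont (by fun_prop))
  have h2 : (fun s : ℝ => s * s ^ 6) =O[𝓝[>] 0] fun s : ℝ => s * 1 :=
    (isBigO_refl _ _).mul (bdd_of_cont (by fun_prop))
  simp only [mul_one] at h1 h2
  have h3 : (fun s : ℝ => s ^ 7) =O[𝓝[>] 0] fun s : ℝ => s := h2.congr_left fun s => by ring
  refine ((IsBigO.trans hf h3).add h1).congr_left fun s => ?_
  ring

lemma J.exp {f : ℝ → ℝ} {a1 a2 a3 a4 a5 a6 : ℝ} (hf : J f 0 a1 a2 a3 a4 a5 a6) :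
    J (fun s => Real.exp (f s)) 1 a1 (a2 + a1 ^ 2 / 2) (a3 + a1 * a2 + a1 ^ 3 / 6)
      (a4 + a1 * a3 + a2 ^ 2 / 2 + a1 ^ 2 * a2 / 2 + a1 ^ 4 / 24)
      (a5 + a1 * a4 + a2 * a3 + a1 ^ 2 * a3 / 2 + a1 * a2 ^ 2 / 2 + a1 ^ 3 * a2 / 6 + a1 ^ 5 / 120)
      (a6 + a1 * a5 + a2 * a4 + a3 ^ 2 / 2 + a1 ^ 2 * a4 / 2 + a1 * a2 * a3 + a2 ^ 3 / 6
        + a1 ^ 3 * a3 / 6 + a1 ^ 2 * a2 ^ 2 / 4 + a1 ^ 4 * a2 / 24 + a1 ^ 6 / 720) := by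
  have f2 := hf.mul hf
  have f3 := f2.mul hf
  have f4 := f3.mul hf
  have f5 := f4.mul hf
  have f6 := f5.mul hf
  have hsum := (J.poly 1 0 0 0 0 0 0).add (hf.add ((f2.const_mul (1/2)).add ((f3.const_mul (1/6)).add
    ((f4.const_mul (1/24)).add ((f5.const_mul (1/120)).add (f6.const_mul (1/720)))))))
  have hO := hf.isBigO_id
  have hsmall : ∀ᶠ s in 𝓝[>] (0:ℝ), |f s| ≤ 1 := by
    have h0 : Tendsto (fun s : ℝ => s) (𝓝[>] 0) (𝓝 0) := tendsto_id.mono_left nhdsWithin_le_nhds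
    have := hO.trans_tendsto h0
    have h1 := this.abs
    rw [abs_zero] at h1
    exact h1.eventually_le_const one_pos
  refine (hsum.of_sub (g := fun s => Real.exp (f s)) ?_).of_eq ?_ ?_ ?_ ?_ ?_ ?_ ?_
  · refine IsBigO.trans (g := fun s => f s ^ 7) ?_ (hO.pow 7)
    refine IsBigO.of_bound 1 ?_
    filter_upwards [hsmall] with s hs
    have h := Real.exp_bound hs (n := 7) (by norm_num)
    simp only [Finset.sum_range_succ, Finset.sum_range_zero, Nat.factorial] at h
    norm_num at h
    rw [Real.norm_eq_abs, Real.norm_eq_abs, one_mul, abs_pow]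
    have h7 : 0 ≤ |f s| ^ 7 := by positivity
    refine le_trans (le_of_eq ?_) (h.trans ?_)
    · congr 1; ring
    · nlinarith
  all_goals ring

lemma J.cos (c : ℝ) : J (fun s => Real.cos (c * s)) 1 0 (-(c ^ 2 / 2)) 0 (c ^ 4 / 24) 0
    (-(c ^ 6 / 720)) := by
  unfold J
  have h1 : (fun s : ℝ => (c * s) ^ 7 * Real.exp |c * s|) =O[𝓝[>] 0] fun s : ℝ => s ^ 7 := by
    have : (fun s : ℝ => s ^ 7 * (c ^ 7 * Real.exp |c * s|)) =O[𝓝[>] 0] fun s : ℝ => s ^ 7 * 1 :=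
      (isBigO_refl _ _).mul (bdd_of_cont (by fun_prop))
    simp only [mul_one] at this
    refine this.congr_left fun s => by ring
  refine IsBigO.trans (IsBigO.of_bound 1 ?_) h1
  refine Eventually.of_forall fun s => ?_
  have h := Complex.norm_exp_sub_sum_le_norm_mul_exp (((c * s : ℝ) : ℂ) * Complex.I) 7
  have h2 := (Complex.abs_re_le_norm _).trans h
  rw [Complex.sub_re, Complex.exp_ofReal_mul_I_re] at h2
  have h3 : (∑ m ∈ Finset.range 7, (((c * s : ℝ) : ℂ) * Complex.I) ^ m / (m.factorial : ℂ)).re =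
      1 - (c * s) ^ 2 / 2 + (c * s) ^ 4 / 24 - (c * s) ^ 6 / 720 := by
    have : (∑ m ∈ Finset.range 7, (((c * s : ℝ) : ℂ) * Complex.I) ^ m / (m.factorial : ℂ)) =
      ((1 - (c * s) ^ 2 / 2 + (c * s) ^ 4 / 24 - (c * s) ^ 6 / 720 : ℝ) : ℂ) +
      (((c * s) - (c * s) ^ 3 / 6 + (c * s) ^ 5 / 120 : ℝ) : ℂ) * Complex.I := by
      simp only [Finset.sum_range_succ, Finset.sum_range_zero, Nat.factorial]
      have hI3 : Complex.I ^ 3 = - Complex.I := Complex.I_pow_three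
      have hI5 : Complex.I ^ 5 = Complex.I := by rw [show (5:ℕ) = 4 + 1 from rfl, pow_add, Complex.I_pow_four]; ring
      have hI6 : Complex.I ^ 6 = -1 := by rw [show (6:ℕ) = 4 + 2 from rfl, pow_add, Complex.I_pow_four, Complex.I_sq]; ring
      simp only [mul_pow, Complex.I_sq, hI3, Complex.I_pow_four, hI5, hI6]
      push_cast
      ring
    rw [this, Complex.add_re, Complex.ofReal_re, Complex.re_ofReal_mul]; simp
  rw [h3] at h2
  rw [norm_mul, Complex.norm_real, Complex.norm_I, mul_one, Real.norm_eq_abs] at h2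
  rw [one_mul, Real.norm_eq_abs, Real.norm_eq_abs, abs_mul, abs_pow, abs_of_pos (Real.exp_pos _)]
  refine le_trans (le_of_eq ?_) h2
  congr 1; ring

lemma J.of_bound {f : ℝ → ℝ} {a0 a1 a2 a3 a4 a5 a6 : ℝ} (K δ : ℝ) (hδ : 0 < δ)
    (h : ∀ s, 0 < s → s < δ → |f s - (a0 + a1 * s + a2 * s ^ 2 + a3 * s ^ 3 + a4 * s ^ 4
      + a5 * s ^ 5 + a6 * s ^ 6)| ≤ K * s ^ 7) : J f a0 a1 a2 a3 a4 a5 a6 := by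
  refine IsBigO.of_bound K ?_
  filter_upwards [Ioo_mem_nhdsGT hδ] with s hs
  rw [Real.norm_eq_abs, Real.norm_eq_abs, abs_of_pos (pow_pos hs.1 7)]
  exact h s hs.1 hs.2

end StableAux
open MeasureTheory ProbabilityTheory

namespace StableAux
open Set Filter Topology Asymptotics

/-- Zeta sums. -/
noncomputable def Z (j : ℕ) : ℝ := ∑' n : ℕ, 1 / ((n : ℝ) + 1) ^ j

lemma Z_hasSum (j : ℕ) (hj : 1 < j) : HasSum (fun n : ℕ => 1 / ((n : ℝ) + 1) ^ j) (Z j) := by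
  have h := (Real.summable_one_div_nat_pow (p := j)).2 hj
  have h2 := (summable_nat_add_iff 1).2 h
  refine Summable.hasSum ?_
  simpa using h2

lemma Z_hasSum' (j : ℕ) (hj : 1 < j) : HasSum (fun n : ℕ => 1 / (n : ℝ) ^ j) (Z j) := by
  rw [← hasSum_nat_add_iff' 1]
  have := Z_hasSum j hj
  simp
  rw [zero_pow (by omega)]
  simpa using this

lemma Z_eq_zeta (j : ℕ) (hj : 1 < j) : riemannZeta (j : ℂ) = ((Z j : ℝ) : ℂ) := by
  rw [zeta_nat_eq_tsum_of_gt_one hj]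
  have := (Complex.hasSum_ofReal.2 (Z_hasSum' j hj)).tsum_eq
  rw [← this]
  congr 1 with n
  push_cast; rfl

lemma Z2 : Z 2 = Real.pi ^ 2 / 6 := (Z_hasSum' 2 (by norm_num)).unique hasSum_zeta_two
lemma Z4 : Z 4 = Real.pi ^ 4 / 90 := (Z_hasSum' 4 (by norm_num)).unique hasSum_zeta_four

lemma bern5 : bernoulli' 5 = 0 := by
  exact bernoulli'_eq_zero_of_odd (by decide) (by norm_num)

lemma bern6 : bernoulli' 6 = 1 / 42 := by
  rw [bernoulli'_def]
  norm_num [Finset.sum_range_succ, bern5, Nat.choose]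

lemma Z6 : Z 6 = Real.pi ^ 6 / 945 := by
  have h := hasSum_zeta_nat (k := 3) (by norm_num)
  rw [show 2 * 3 = 6 from rfl] at h
  rw [(Z_hasSum' 6 (by norm_num)).unique h]
  rw [bernoulli_eq_bernoulli'_of_ne_one (by norm_num), bern6]
  simp [Nat.factorial]; ring

lemma log_one_add_bound (y : ℝ) (hy : 0 < y) (hy1 : y ≤ 1 / 2) :
    |-Real.log (1 + y) - (-y + y ^ 2 / 2 - y ^ 3 / 3 + y ^ 4 / 4 - y ^ 5 / 5 + y ^ 6 / 6)|
      ≤ 2 * y ^ 7 := by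
  have h := Real.abs_log_sub_add_sum_range_le (x := -y) (by rw [abs_neg, abs_of_pos hy]; linarith) 6
  simp only [Finset.sum_range_succ, Finset.sum_range_zero, abs_neg, abs_of_pos hy, sub_neg_eq_add] at h
  have h2 : y ^ (6 + 1) / (1 - y) ≤ 2 * y ^ 7 := by
    rw [div_le_iff₀ (by linarith)]
    have h3 := mul_le_mul_of_nonneg_left hy1 (pow_pos hy 7).le
    have h4 : 2 * y ^ 7 * (1 - y) = 2 * y ^ 7 - 2 * (y ^ 7 * y) := by ring
    rw [h4]
    change y ^ 7 ≤ _
    linarith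
  refine le_trans (le_of_eq ?_) (h.trans h2)
  rw [← abs_neg]
  congr 1
  push_cast
  ring

lemma logGamma_lim (x : ℝ) (hx : 0 < x) :
    Tendsto (fun n : ℕ => x * Real.log n + ∑ k ∈ Finset.range n, -Real.log (1 + x / ((k:ℝ) + 1)))
      atTop (𝓝 (Real.log (Real.Gamma (1 + x)))) := by
  have h := (Real.BohrMollerup.tendsto_log_gamma hx).add_const (Real.log x)
  have h1 : Real.log (Real.Gamma (1 + x)) = Real.log (Real.Gamma x) + Real.log x := by
    rw [add_comm, Real.Gamma_add_one hx.ne', Real.log_mul hx.ne' (Real.Gamma_pos_of_pos hx).ne']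
    ring
  rw [h1]
  refine h.congr fun n => ?_
  unfold Real.BohrMollerup.logGammaSeq
  rw [Finset.sum_range_succ']
  have h2 : Real.log (n.factorial : ℝ) = ∑ k ∈ Finset.range n, Real.log ((k:ℝ) + 1) := by
    rw [← Finset.prod_range_add_one_eq_factorial]
    push_cast
    rw [Real.log_prod]
    intro i _; positivity
  rw [h2]
  have h3 : ∀ k : ℕ, -Real.log (1 + x / ((k:ℝ) + 1)) = Real.log ((k:ℝ) + 1) - Real.log (x + ((k + 1 : ℕ) : ℝ)) := by
    intro k
    have hk : (0:ℝ) < (k:ℝ) + 1 := by positivity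
    have : 1 + x / ((k:ℝ) + 1) = (x + ((k + 1 : ℕ) : ℝ)) / ((k:ℝ) + 1) := by
      push_cast; field_simp; ring
    rw [this, Real.log_div (by positivity) hk.ne']
    ring
  simp_rw [h3]
  rw [Finset.sum_sub_distrib]
  simp
  ring

lemma J.logGamma : J (fun s => Real.log (Real.Gamma (1 + s))) 0 (-Real.eulerMascheroniConstant)
    (Z 2 / 2) (-(Z 3 / 3)) (Z 4 / 4) (-(Z 5 / 5)) (Z 6 / 6) := by
  refine J.of_bound (2 * Z 7) (1 / 2) (by norm_num) fun x hx hx1 => ?_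
  have hS := logGamma_lim x hx
  let S : ℕ → ℕ → ℝ := fun j n => ∑ k ∈ Finset.range n, 1 / ((k : ℝ) + 1) ^ j
  have hSl : ∀ j, 1 < j → Tendsto (S j) atTop (𝓝 (Z j)) := fun j hj =>
    (Z_hasSum j hj).tendsto_sum_nat
  have hH : Tendsto (fun n : ℕ => S 1 n - Real.log n) atTop (𝓝 Real.eulerMascheroniConstant) := by
    refine Real.tendsto_harmonic_sub_log.congr fun n => ?_
    simp [S, harmonic]
  have hT : Tendsto (fun n : ℕ => -x * (S 1 n - Real.log n) + x ^ 2 / 2 * S 2 n - x ^ 3 / 3 * S 3 n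
      + x ^ 4 / 4 * S 4 n - x ^ 5 / 5 * S 5 n + x ^ 6 / 6 * S 6 n) atTop
      (𝓝 (-x * Real.eulerMascheroniConstant + x ^ 2 / 2 * Z 2 - x ^ 3 / 3 * Z 3
      + x ^ 4 / 4 * Z 4 - x ^ 5 / 5 * Z 5 + x ^ 6 / 6 * Z 6)) :=
    (((((hH.const_mul _).add ((hSl 2 (by norm_num)).const_mul _)).sub
      ((hSl 3 (by norm_num)).const_mul _)).add ((hSl 4 (by norm_num)).const_mul _)).sub
      ((hSl 5 (by norm_num)).const_mul _)).add ((hSl 6 (by norm_num)).const_mul _)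
  have hlim := (hS.sub hT).abs
  refine le_trans (le_of_eq ?_) (le_of_tendsto hlim (b := 2 * Z 7 * x ^ 7) (Eventually.of_forall fun n => ?_))
  · congr 1; ring
  · have e : (x * Real.log n + ∑ k ∈ Finset.range n, -Real.log (1 + x / ((k:ℝ) + 1))) -
      (-x * (S 1 n - Real.log n) + x ^ 2 / 2 * S 2 n - x ^ 3 / 3 * S 3 n
      + x ^ 4 / 4 * S 4 n - x ^ 5 / 5 * S 5 n + x ^ 6 / 6 * S 6 n) =
      ∑ k ∈ Finset.range n, (-Real.log (1 + x / ((k:ℝ) + 1)) - (-(x / ((k:ℝ) + 1)) + (x / ((k:ℝ) + 1)) ^ 2 / 2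
        - (x / ((k:ℝ) + 1)) ^ 3 / 3 + (x / ((k:ℝ) + 1)) ^ 4 / 4 - (x / ((k:ℝ) + 1)) ^ 5 / 5
        + (x / ((k:ℝ) + 1)) ^ 6 / 6)) := by
      have e2 : -x * S 1 n + x ^ 2 / 2 * S 2 n - x ^ 3 / 3 * S 3 n
        + x ^ 4 / 4 * S 4 n - x ^ 5 / 5 * S 5 n + x ^ 6 / 6 * S 6 n =
        ∑ k ∈ Finset.range n, (-(x / ((k:ℝ) + 1)) + (x / ((k:ℝ) + 1)) ^ 2 / 2
        - (x / ((k:ℝ) + 1)) ^ 3 / 3 + (x / ((k:ℝ) + 1)) ^ 4 / 4 - (x / ((k:ℝ) + 1)) ^ 5 / 5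
        + (x / ((k:ℝ) + 1)) ^ 6 / 6) := by
        simp only [S, Finset.mul_sum, ← Finset.sum_add_distrib, ← Finset.sum_sub_distrib]
        refine Finset.sum_congr rfl fun k _ => ?_
        simp only [div_pow]
        ring
      rw [Finset.sum_sub_distrib, ← e2]
      ring
    rw [e]
    refine (Finset.abs_sum_le_sum_abs _ _).trans ?_
    have h1 : ∀ k ∈ Finset.range n, |-Real.log (1 + x / ((k:ℝ) + 1)) - (-(x / ((k:ℝ) + 1)) + (x / ((k:ℝ) + 1)) ^ 2 / 2
        - (x / ((k:ℝ) + 1)) ^ 3 / 3 + (x / ((k:ℝ) + 1)) ^ 4 / 4 - (x / ((k:ℝ) + 1)) ^ 5 / 5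
        + (x / ((k:ℝ) + 1)) ^ 6 / 6)| ≤ 2 * x ^ 7 * (1 / ((k:ℝ) + 1) ^ 7) := by
      intro k _
      have hk : (0:ℝ) < (k:ℝ) + 1 := by positivity
      have hy : x / ((k:ℝ) + 1) ≤ 1 / 2 := by
        rw [div_le_iff₀ hk]
        have : (0:ℝ) ≤ k := by positivity
        linarith
      refine (log_one_add_bound _ (by positivity) hy).trans (le_of_eq ?_)
      rw [div_pow]; ring
    refine (Finset.sum_le_sum h1).trans ?_
    rw [← Finset.mul_sum]
    have h2 : ∑ k ∈ Finset.range n, 1 / ((k:ℝ) + 1) ^ 7 ≤ Z 7 :=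
      sum_le_hasSum _ (fun k _ => by positivity) (Z_hasSum 7 (by norm_num))
    have := mul_le_mul_of_nonneg_left h2 (show 0 ≤ 2 * x ^ 7 by positivity)
    linarith

end StableAux
open MeasureTheory ProbabilityTheory

namespace StableAux
open Set Filter Topology Asymptotics

lemma exp_rem (x : ℝ) : |Real.exp x - (1 + x + x ^ 2 / 2 + x ^ 3 / 6 + x ^ 4 / 24 + x ^ 5 / 120
    + x ^ 6 / 720)| ≤ 8 * (|x| ^ 7 * (1 + Real.exp x)) := by
  have he := Real.exp_pos x
  have h7 : 0 ≤ |x| ^ 7 := by positivity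
  rcases le_or_gt |x| 1 with hx | hx
  · have h := Real.exp_bound hx (n := 7) (by norm_num)
    simp only [Finset.sum_range_succ, Finset.sum_range_zero, Nat.factorial] at h
    norm_num at h
    have e := mul_nonneg h7 he.le
    linarith
  · have hp : ∀ m : ℕ, m ≤ 7 → |x ^ m| ≤ |x| ^ 7 := by
      intro m hm
      rw [abs_pow]
      exact pow_le_pow_right₀ hx.le hm
    have h0 : 1 ≤ |x| ^ 7 := one_le_pow₀ hx.le
    have h1 := abs_le.1 (hp 1 (by norm_num))
    have h2 := abs_le.1 (hp 2 (by norm_num))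
    have h3 := abs_le.1 (hp 3 (by norm_num))
    have h4 := abs_le.1 (hp 4 (by norm_num))
    have h5 := abs_le.1 (hp 5 (by norm_num))
    have h6 := abs_le.1 (hp 6 (by norm_num))
    have e := mul_nonneg h7 he.le
    have e2 : Real.exp x ≤ |x| ^ 7 * Real.exp x := le_mul_of_one_le_left he.le h0
    rw [abs_le]
    constructor <;> linarith [h1.1, h1.2, h2.1, h2.2, h3.1, h3.2, h4.1, h4.2, h5.1, h5.2, h6.1, h6.2, pow_one x]

lemma exp_le_aux (L s u : ℝ) (hs : 0 ≤ s) (hsu : s ≤ u) : Real.exp (-(s * L)) ≤ 1 + Real.exp (-(u * L)) := by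
  rcases le_or_gt 0 L with h | h
  · have : Real.exp (-(s * L)) ≤ 1 := by
      rw [Real.exp_le_one_iff]; nlinarith
    linarith [Real.exp_pos (-(u * L))]
  · have : Real.exp (-(s * L)) ≤ Real.exp (-(u * L)) := by
      apply Real.exp_le_exp.2; nlinarith
    linarith

lemma J.moments {Ω : Type*} [MeasurableSpace Ω] (μ : Measure Ω) [IsProbabilityMeasure μ]
    (L : Ω → ℝ) (hL : Measurable L) (hp : ∀ p : ℕ, Integrable (fun ω => |L ω| ^ p) μ)
    (he : Integrable (fun ω => Real.exp (-(1 / 2 * L ω))) μ) :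
    J (fun s => ∫ ω, Real.exp (-(s * L ω)) ∂μ) 1 (-(∫ ω, L ω ∂μ)) ((∫ ω, L ω ^ 2 ∂μ) / 2)
      (-((∫ ω, L ω ^ 3 ∂μ) / 6)) ((∫ ω, L ω ^ 4 ∂μ) / 24) (-((∫ ω, L ω ^ 5 ∂μ) / 120))
      ((∫ ω, L ω ^ 6 ∂μ) / 720) := by
  have hp' : ∀ p : ℕ, Integrable (fun ω => L ω ^ p) μ := by
    intro p
    refine (hp p).mono' (hL.pow_const p).aestronglyMeasurable (Eventually.of_forall fun ω => ?_)
    rw [Real.norm_eq_abs, abs_pow]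
  have hL1 : Integrable L μ := by simpa using hp' 1
  set B : Ω → ℝ := fun ω => 3 * |L ω| ^ 7 + (|L ω| ^ 14 + Real.exp (-(1 / 2 * L ω))) with hB
  have hBi : Integrable B μ := ((hp 7).const_mul 3).add ((hp 14).add he)
  refine J.of_bound (8 * ∫ ω, B ω ∂μ) (1 / 4) (by norm_num) fun s hs hs1 => ?_
  have hes : Integrable (fun ω => Real.exp (-(s * L ω))) μ := by
    refine ((integrable_const (1:ℝ)).add he).mono' (by fun_prop) (Eventually.of_forall fun ω => ?_)
    rw [Real.norm_of_nonneg (Real.exp_pos _).le]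
    exact exp_le_aux _ _ _ hs.le (by linarith)
  set P : Ω → ℝ := fun ω => 1 + -s * L ω + s ^ 2 / 2 * L ω ^ 2 + -(s ^ 3 / 6) * L ω ^ 3
    + s ^ 4 / 24 * L ω ^ 4 + -(s ^ 5 / 120) * L ω ^ 5 + s ^ 6 / 720 * L ω ^ 6 with hP
  have i0 : Integrable (fun _ : Ω => (1:ℝ)) μ := integrable_const _
  have i1 := i0.add (hL1.const_mul (-s))
  have i2 := i1.add ((hp' 2).const_mul (s ^ 2 / 2))
  have i3 := i2.add ((hp' 3).const_mul (-(s ^ 3 / 6)))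
  have i4 := i3.add ((hp' 4).const_mul (s ^ 4 / 24))
  have i5 := i4.add ((hp' 5).const_mul (-(s ^ 5 / 120)))
  have i6 := i5.add ((hp' 6).const_mul (s ^ 6 / 720))
  have hPi : Integrable P μ := i6
  have hPint : ∫ ω, P ω ∂μ = 1 + -(∫ ω, L ω ∂μ) * s + (∫ ω, L ω ^ 2 ∂μ) / 2 * s ^ 2
      + (-((∫ ω, L ω ^ 3 ∂μ) / 6)) * s ^ 3 + ((∫ ω, L ω ^ 4 ∂μ) / 24) * s ^ 4
      + (-((∫ ω, L ω ^ 5 ∂μ) / 120)) * s ^ 5 + ((∫ ω, L ω ^ 6 ∂μ) / 720) * s ^ 6 := by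
    have := integral_add i5 ((hp' 6).const_mul (s ^ 6 / 720))
    have t5 := integral_add i4 ((hp' 5).const_mul (-(s ^ 5 / 120)))
    have t4 := integral_add i3 ((hp' 4).const_mul (s ^ 4 / 24))
    have t3 := integral_add i2 ((hp' 3).const_mul (-(s ^ 3 / 6)))
    have t2 := integral_add i1 ((hp' 2).const_mul (s ^ 2 / 2))
    have t1 := integral_add i0 (hL1.const_mul (-s))
    simp only [Pi.add_apply, integral_const_mul, integral_const, probReal_univ, smul_eq_mul, mul_one] at this t1 t2 t3 t4 t5
    rw [t5, t4, t3, t2, t1] at this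
    rw [show ∫ ω, P ω ∂μ = _ from this]
    ring
  rw [← hPint, ← integral_sub hes hPi]
  have hb : ∀ ω, ‖Real.exp (-(s * L ω)) - P ω‖ ≤ 8 * s ^ 7 * B ω := by
    intro ω
    have h := exp_rem (-(s * L ω))
    rw [Real.norm_eq_abs]
    have e1 : |Real.exp (-(s * L ω)) - P ω| = |Real.exp (-(s * L ω)) - (1 + -(s * L ω) + (-(s * L ω)) ^ 2 / 2 + (-(s * L ω)) ^ 3 / 6 + (-(s * L ω)) ^ 4 / 24 + (-(s * L ω)) ^ 5 / 120
    + (-(s * L ω)) ^ 6 / 720)| := by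
      congr 1; simp only [hP]; ring
    rw [e1]
    refine h.trans ?_
    rw [abs_neg, abs_mul, abs_of_pos hs, mul_pow]
    have h2 := exp_le_aux (L ω) s (1/4) hs.le hs1.le
    have h3 : Real.exp (-(1 / 2 * L ω)) = Real.exp (-(1 / 4 * L ω)) ^ 2 := by
      rw [← Real.exp_nat_mul]; congr 1; push_cast; ring
    have h4 : |L ω| ^ 14 = (|L ω| ^ 7) ^ 2 := by ring
    have h7 : 0 ≤ |L ω| ^ 7 := by positivity
    have h5 : |L ω| ^ 7 * (1 + Real.exp (-(s * L ω))) ≤ B ω := by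
      simp only [hB]
      rw [h3, h4]
      have := mul_le_mul_of_nonneg_left h2 h7
      nlinarith [sq_nonneg (|L ω| ^ 7 - Real.exp (-(1 / 4 * L ω))), sq_nonneg (|L ω| ^ 7), sq_nonneg (Real.exp (-(1 / 4 * L ω)))]
    have := mul_le_mul_of_nonneg_left h5 (show 0 ≤ 8 * s ^ 7 by positivity)
    linarith
  have := norm_integral_le_of_norm_le (hBi.const_mul (8 * s ^ 7)) (Eventually.of_forall hb)
  rw [integral_const_mul, Real.norm_eq_abs] at this
  linarith

end StableAux
namespace StableAux
open Set Filter Topology Asymptotics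

lemma stable_degenerate {Ω : Type*} [MeasurableSpace Ω] (μ : Measure Ω) [IsProbabilityMeasure μ]
    (X : Ω → ℝ) (hX : Measurable X) (c : ℝ)
    (h : ∀ k : ℝ, k ≠ 0 → ∫ ω, Complex.exp (Complex.I * k * X ω) ∂μ = Complex.exp (Complex.I * k * c)) :
    ∀ᵐ ω ∂μ, X ω = c := by
  have : IsProbabilityMeasure (μ.map X) := Measure.isProbabilityMeasure_map hX.aemeasurable
  have hm : μ.map X = Measure.dirac c := by
    apply Measure.ext_of_charFun
    ext k
    rw [charFun_apply_real, charFun_apply_real, integral_dirac,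
      integral_map hX.aemeasurable (Measurable.aestronglyMeasurable (by fun_prop))]
    by_cases hk : k = 0
    · simp [hk]
    · have := h k hk
      have e : ∀ x : ℝ, Complex.exp (k * x * Complex.I) = Complex.exp (Complex.I * k * x) := by
        intro x; congr 1; ring
      simp_rw [e]
      exact this
  have h2 : ∀ᵐ y ∂(μ.map X), y = c := by
    rw [hm, ae_dirac_iff (measurableSet_eq)]
  exact ae_of_ae_map hX.aemeasurable h2

lemma re_A (p q s b : ℝ) (hb : 0 < b) (hq : |q| < Real.pi) :
    ((Complex.exp ((p : ℂ) - Complex.I * q)) ^ (((-(s * b) : ℝ)) : ℂ)).re =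
      Real.exp (-(s * b * p)) * Real.cos (s * b * q) := by
  have h1 := abs_lt.1 hq
  rw [Complex.cpow_def_of_ne_zero (Complex.exp_ne_zero _), Complex.log_exp]
  · rw [Complex.exp_re]
    have e1 : (((p : ℂ) - Complex.I * q) * (((-(s * b) : ℝ)) : ℂ)).re = -(s * b * p) := by
      simp; ring
    have e2 : (((p : ℂ) - Complex.I * q) * (((-(s * b) : ℝ)) : ℂ)).im = s * b * q := by
      simp; ring
    rw [e1, e2]
  · simp; linarith
  · simp; linarith

lemma stable_laplace {Ω : Type*} [MeasurableSpace Ω] (μ : Measure Ω) [IsProbabilityMeasure μ]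
    (X : Ω → ℝ) (hX : Measurable X) (hX0 : ∀ᵐ ω ∂μ, X ω ≠ 0) (b θ τ C : ℝ) (hb : 0 < b)
    (hθ : |θ| < b)
    (hφ : ∀ t : ℝ, 0 < t → ∫ ω, Complex.exp (Complex.I * t * X ω) ∂μ =
      Complex.exp (-Complex.exp ((b⁻¹ : ℝ) * ((Real.log t : ℝ) + (τ : ℂ) -
        Complex.I * ((Real.pi / 2 : ℝ) : ℂ) * θ) + C * ((b⁻¹ : ℝ) - 1))))
    (s : ℝ) (hs : 0 < s) (hs1 : s < 1) :
    Integrable (fun ω => Real.exp (-(s * Real.log |X ω|))) μ ∧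
    (∫ ω, Real.exp (-(s * Real.log |X ω|)) ∂μ) * Real.cos (Real.pi / 2 * s) =
      Real.cos (Real.pi * θ / 2 * s) * Real.exp (Real.log (Real.Gamma (1 + b * s)) +
        ((-1) * Real.log (Real.Gamma (1 + s)) + (-(τ + C * (1 - b))) * s)) := by
  set q : ℝ := b⁻¹ * (Real.pi / 2 * θ) with hq
  set p : ℝ := b⁻¹ * τ + C * (b⁻¹ - 1) with hp
  set A : ℂ := Complex.exp ((p : ℂ) - Complex.I * q) with hA
  have hqlt : |q| < Real.pi / 2 := by
    rw [hq, abs_mul, abs_mul, abs_of_pos (inv_pos.2 hb), abs_of_pos (by positivity)]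
    rw [inv_mul_lt_iff₀ hb, mul_comm]
    exact mul_lt_mul_of_pos_right hθ (by positivity)
  have hAre : 0 < A.re := by
    rw [hA, Complex.exp_re]
    refine mul_pos (Real.exp_pos _) ?_
    have := abs_lt.1 hqlt
    apply Real.cos_pos_of_mem_Ioo
    constructor <;> simp <;> linarith
  have hφ' : ∀ t : ℝ, 0 < t → ∫ ω, Complex.exp (Complex.I * t * X ω) ∂μ =
      Complex.exp (-(A * ((t ^ (b⁻¹) : ℝ) : ℂ))) := by
    intro t ht
    rw [hφ t ht]
    congr 2
    rw [Real.rpow_def_of_pos ht, hA, Complex.ofReal_exp, ← Complex.exp_add]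
    congr 1
    rw [hp, hq]; push_cast; ring
  obtain ⟨hint, heq⟩ := mellin μ X hX hX0 s b⁻¹ A hs hs1 (inv_pos.2 hb) hAre hφ'
  have hae : (fun ω => |X ω| ^ (-s)) =ᵐ[μ] fun ω => Real.exp (-(s * Real.log |X ω|)) := by
    filter_upwards [hX0] with ω hω
    rw [Real.rpow_def_of_pos (abs_pos.2 hω)]
    congr 1; ring
  refine ⟨hint.congr hae, ?_⟩
  rw [integral_congr_ae hae] at heq
  rw [div_inv_eq_mul s b, hA, re_A p q s b hb (by linarith [Real.pi_pos])] at heq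
  have hΓs := Real.Gamma_pos_of_pos hs
  have hΓ1 : 0 < Real.Gamma (1 + s) := Real.Gamma_pos_of_pos (by linarith)
  have hΓ2 : 0 < Real.Gamma (1 + b * s) := Real.Gamma_pos_of_pos (by positivity)
  have g1 : Real.Gamma (1 + s) = s * Real.Gamma s := by rw [add_comm, Real.Gamma_add_one hs.ne']
  have g2 : Real.Gamma (1 + b * s) = (s * b) * Real.Gamma (s * b) := by
    rw [add_comm, mul_comm b s, Real.Gamma_add_one (by positivity)]
  rw [Real.exp_add, Real.exp_add, Real.exp_log hΓ2, neg_one_mul, Real.exp_neg, Real.exp_log hΓ1]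
  have e1 : Real.exp (-(s * b * p)) = Real.exp (-(τ + C * (1 - b)) * s) := by
    congr 1; rw [hp]; field_simp
  have e2 : Real.cos (s * b * q) = Real.cos (Real.pi * θ / 2 * s) := by
    congr 1; rw [hq]; field_simp
  have e3 : Real.cos (Real.pi * s / 2) = Real.cos (Real.pi / 2 * s) := by
    congr 1; ring
  rw [e1, e2, e3] at heq
  have h1 : (1 / b⁻¹) = b := by simp
  rw [h1] at heq
  rw [g2, g1]
  clear e1 e2 e3
  generalize Real.cos (Real.pi / 2 * s) = c1 at heq ⊢
  generalize Real.cos (Real.pi * θ / 2 * s) = c2 at heq ⊢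
  generalize Real.exp (-(τ + C * (1 - b)) * s) = c3 at heq ⊢
  field_simp
  linear_combination heq

lemma sixth_generic {Ω : Type*} [MeasurableSpace Ω] (μ : Measure Ω) [IsProbabilityMeasure μ]
    (X : Ω → ℝ) (hX : Measurable X) (hX0 : ∀ᵐ ω ∂μ, X ω ≠ 0) (b θ τ : ℝ) (hb : 0 < b)
    (hθ : |θ| < b) (hp : ∀ p : ℕ, Integrable (fun ω => (abs (Real.log (abs (X ω)))) ^ p) μ)
    (hφ : ∀ t : ℝ, 0 < t → ∫ ω, Complex.exp (Complex.I * t * X ω) ∂μ =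
      Complex.exp (-Complex.exp ((b⁻¹ : ℝ) * ((Real.log t : ℝ) + (τ : ℂ) -
        Complex.I * ((Real.pi / 2 : ℝ) : ℂ) * θ) +
          (Real.eulerMascheroniConstant : ℝ) * ((b⁻¹ : ℝ) - 1))))
    (DV : ℝ) (hDV : DV = Real.pi ^ 2 / 4 * (1 - θ ^ 2) + Real.pi ^ 2 / 6 * (b ^ 2 - 1)) :
    (∫ ω, (Real.log |X ω|) ^ 6 ∂μ) =
      τ ^ 6 + 15 * τ ^ 4 * DV + 40 * τ ^ 3 * Z 3 * (b ^ 3 - 1)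
        + 45 * τ ^ 2 * DV ^ 2 + 15 * DV ^ 3
        + 15 * τ ^ 2 * Real.pi ^ 4 * ((1 - θ ^ 4) / 8 + (b ^ 4 - 1) / 15)
        + 120 * τ * Z 3 * (b ^ 3 - 1) * DV
        + 40 * Z 3 ^ 2 * (b ^ 3 - 1) ^ 2
        + 144 * τ * Z 5 * (b ^ 5 - 1)
        + 15 * Real.pi ^ 4 * ((1 - θ ^ 4) / 8 + (b ^ 4 - 1) / 15) * DV
        + 8 * Real.pi ^ 6 * ((1 - θ ^ 6) / 32 + (b ^ 6 - 1) / 63) := by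
  have hlap := stable_laplace μ X hX hX0 b θ τ Real.eulerMascheroniConstant hb hθ hφ
  have hmom := J.moments μ (fun ω => Real.log |X ω|) (by fun_prop) hp
    (hlap (1/2) (by norm_num) (by norm_num)).1
  have hl := hmom.mul (J.cos (Real.pi / 2))
  have hH := ((J.logGamma.scale b hb).add ((J.logGamma.const_mul (-1)).add
    (J.poly 0 (-(τ + Real.eulerMascheroniConstant * (1 - b))) 0 0 0 0 0)))
  have hH' := hH.of_eq (b0 := 0) (by ring) rfl rfl rfl rfl rfl rfl
  have hr := (J.cos (Real.pi * θ / 2)).mul hH'.exp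
  have hr' := hr.congr (g := fun s => (∫ ω, Real.exp (-(s * Real.log |X ω|)) ∂μ) * Real.cos (Real.pi / 2 * s)) (by
    filter_upwards [Ioo_mem_nhdsGT (show (0:ℝ) < 1 by norm_num)] with s hs
    rw [(hlap s hs.1 hs.2).2]
    simp)
  obtain ⟨-, -, e2, -, e4, -, e6⟩ := hl.unique hr'
  rw [hDV]
  rw [Z2, Z4, Z6] at e6
  rw [Z2, Z4] at e4
  rw [Z2] at e2
  linear_combination 720 * e6 + 360 * (Real.pi / 2) ^ 2 * e4 + 150 * (Real.pi / 2) ^ 4 * e2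

end StableAux

open StableAux in
theorem sixth_log_moment_of_strictlyStable {Ω : Type*} [MeasureSpace Ω]
    [IsProbabilityMeasure (ℙ : Measure Ω)] (X : Ω → ℝ) (ν θ τ : ℝ)
    (hX : IsStrictlyStable X ν θ τ)
    (DV : ℝ) (hDV : DV = Real.pi ^ 2 / 4 * (1 - θ ^ 2) + Real.pi ^ 2 / 6 * (ν - 1)) :
    (∫ ω, (Real.log |X ω|) ^ 6) =
      τ ^ 6 + 15 * τ ^ 4 * DV + 40 * τ ^ 3 * zetaR 3 * (ν ^ ((3 : ℝ) / 2) - 1)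
        + 45 * τ ^ 2 * DV ^ 2 + 15 * DV ^ 3
        + 15 * τ ^ 2 * Real.pi ^ 4 * ((1 - θ ^ 4) / 8 + (ν ^ 2 - 1) / 15)
        + 120 * τ * zetaR 3 * (ν ^ ((3 : ℝ) / 2) - 1) * DV
        + 40 * zetaR 3 ^ 2 * (ν ^ ((3 : ℝ) / 2) - 1) ^ 2
        + 144 * τ * zetaR 5 * (ν ^ ((5 : ℝ) / 2) - 1)
        + 15 * Real.pi ^ 4 * ((1 - θ ^ 4) / 8 + (ν ^ 2 - 1) / 15) * DV
        + 8 * Real.pi ^ 6 * ((1 - θ ^ 6) / 32 + (ν ^ 3 - 1) / 63) := by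
  obtain ⟨hXm, hν, hθ, hX0, hp, hφ⟩ := hX
  have hν0 : 0 < ν := by linarith
  set b := Real.sqrt ν with hbdef
  have hb : 0 < b := Real.sqrt_pos.2 hν0
  have hb2 : b ^ 2 = ν := Real.sq_sqrt hν0.le
  have hX0' : ∀ᵐ ω ∂(ℙ : Measure Ω), X ω ≠ 0 := by
    rw [ae_iff]; simpa using hX0
  have hrp : ∀ n : ℕ, ν ^ ((n : ℝ) / 2) = b ^ n := by
    intro n
    rw [hbdef, Real.sqrt_eq_rpow, ← Real.rpow_natCast, ← Real.rpow_mul hν0.le]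
    congr 1; ring
  have h3 : ν ^ ((3 : ℝ) / 2) = b ^ 3 := by exact_mod_cast hrp 3
  have h5 : ν ^ ((5 : ℝ) / 2) = b ^ 5 := by exact_mod_cast hrp 5
  have hinv : ν ^ (-(1/2) : ℝ) = b⁻¹ := by
    rw [Real.rpow_neg hν0.le, hbdef, Real.sqrt_eq_rpow]
  have z3 : zetaR 3 = Z 3 := by
    unfold zetaR
    have := Z_eq_zeta 3 (by norm_num)
    push_cast at this ⊢
    rw [this, Complex.ofReal_re]
  have z5 : zetaR 5 = Z 5 := by
    unfold zetaR
    have := Z_eq_zeta 5 (by norm_num)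
    push_cast at this ⊢
    rw [this, Complex.ofReal_re]
  rw [hinv] at hφ
  have hθ1 := hθ.trans (min_le_left _ _)
  have hθ2 := hθ.trans (min_le_right _ _)
  by_cases hdeg : |θ| < b
  · have := sixth_generic (ℙ : Measure Ω) X hXm hX0' b θ τ hb hdeg hp (by
      intro t ht
      rw [hφ t ht.ne', abs_of_pos ht, Real.sign_of_pos ht]
      simp) DV (by rw [hDV, hb2])
    rw [this, h3, h5, z3, z5, ← hb2]
    ring
  · have hb1 : b = 1 := by
      have : b ≤ |θ| := not_lt.1 hdeg
      apply le_antisymm <;> linarith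
    have hθabs : |θ| = 1 := le_antisymm hθ1 (by linarith [not_lt.1 hdeg])
    have hθsq : θ ^ 2 = 1 := by rw [← sq_abs, hθabs, one_pow]
    have hν1 : ν = 1 := by rw [← hb2, hb1, one_pow]
    have hDV0 : DV = 0 := by rw [hDV, hθsq, hν1]; ring
    have hθ4 : θ ^ 4 = 1 := by rw [show 4 = 2 * 2 from rfl, pow_mul, hθsq, one_pow]
    have hθ6 : θ ^ 6 = 1 := by rw [show 6 = 2 * 3 from rfl, pow_mul, hθsq, one_pow]
    have hc : ∀ᵐ ω ∂(ℙ : Measure Ω), X ω = θ * Real.exp τ := by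
      apply stable_degenerate _ X hXm
      intro k hk
      rw [hφ k hk, hb1]
      have key : Complex.exp (-(Complex.I * ((Real.pi / 2 : ℝ) : ℂ) * θ * ((Real.sign k : ℝ) : ℂ)))
          = -(Complex.I * θ * ((Real.sign k : ℝ) : ℂ)) := by
        have hcase : ∀ x : ℝ, (x = 1 ∨ x = -1) →
            Complex.exp (-(Complex.I * ((Real.pi / 2 : ℝ) : ℂ) * x)) = -(Complex.I * x) := by
          intro x hx
          rcases hx with rfl | rfl
          · have := Complex.exp_neg_pi_div_two_mul_I
            rw [show -(Complex.I * ((Real.pi / 2 : ℝ) : ℂ) * ((1:ℝ):ℂ)) = -(Real.pi : ℂ) / 2 * Complex.I by push_cast; ring, this]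
            simp
          · have := Complex.exp_pi_div_two_mul_I
            rw [show -(Complex.I * ((Real.pi / 2 : ℝ) : ℂ) * ((-1:ℝ):ℂ)) = (Real.pi : ℂ) / 2 * Complex.I by push_cast; ring, this]
            simp
        have h := hcase (θ * Real.sign k) (by
          have h1 : θ = 1 ∨ θ = -1 := by simpa using hθsq
          rcases h1 with h | h <;> rcases lt_or_gt_of_ne hk with h' | h' <;>
            simp [h, Real.sign_of_neg, Real.sign_of_pos, h'])
        push_cast at h ⊢
        rw [← mul_assoc, ← mul_assoc] at h
        exact h
      have hkabs : Real.exp (Real.log |k|) * Real.sign k = k := by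
        rw [Real.exp_log (abs_pos.2 hk)]
        rcases lt_or_gt_of_ne hk with h' | h'
        · rw [Real.sign_of_neg h', abs_of_neg h']; ring
        · rw [Real.sign_of_pos h', abs_of_pos h']; ring
      congr 1
      have e : (((1:ℝ)⁻¹ : ℝ) : ℂ) * (((Real.log |k| : ℝ) : ℂ) + (τ : ℂ) -
              Complex.I * ((Real.pi / 2 : ℝ) : ℂ) * (θ : ℂ) * ((Real.sign k : ℝ) : ℂ)) +
          ((Real.eulerMascheroniConstant : ℝ) : ℂ) * ((((1:ℝ)⁻¹ : ℝ) : ℂ) - 1) =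
          ((Real.log |k| : ℝ) : ℂ) + (τ : ℂ) + -(Complex.I * ((Real.pi / 2 : ℝ) : ℂ) * (θ : ℂ) * ((Real.sign k : ℝ) : ℂ)) := by
        simp; ring
      rw [e, Complex.exp_add, Complex.exp_add, key]
      have hk2 : Complex.exp ((Real.log |k| : ℝ) : ℂ) * ((Real.sign k : ℝ) : ℂ) = k := by
        rw [← Complex.ofReal_exp, ← Complex.ofReal_mul, hkabs]
      push_cast
      linear_combination Complex.I * θ * Complex.exp τ * hk2
    have hlog : ∀ᵐ ω ∂(ℙ : Measure Ω), (Real.log |X ω|) ^ 6 = τ ^ 6 := by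
      filter_upwards [hc] with ω hω
      rw [hω, abs_mul, hθabs, one_mul, abs_of_pos (Real.exp_pos _), Real.log_exp]
    rw [integral_congr_ae hlog, hDV0, hθ4, hθ6, hν1]
    simp
end
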